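/- Let p = 5 and let N be a prime with N ≡ 1 (mod 5). Then 1 ≤ r_K ≤ 3. -/

import Mathlib

open scoped TensorProduct

/-- The `p`-rank of a commutative group `G`, i.e. `dim_{𝔽_p}(G ⊗ 𝔽_p)`. -/
noncomputable def pRank (p : ℕ) (G : Type*) [CommGroup G] : ℕ :=
  Module.finrank (ZMod p) (ZMod p ⊗[ℤ] Additive G)

/-- The `p`-rank of the class group of the number field `K`. -/
noncomputable def classRank (p : ℕ) (K : Type*) [Field K] : ℕ :=
  pRank p (ClassGroup (NumberField.RingOfIntegers K))

/-- `p` is a regular prime: `p` does not divide the class number of `ℚ(ζ_p)`. -/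
def RegularPrime (p : ℕ+) : Prop :=
  ¬ (p : ℕ) ∣ Nat.card (ClassGroup (NumberField.RingOfIntegers (CyclotomicField p ℚ)))

/-- `M_i = ∏_{k=1}^{N-1} ∏_{a=1}^{k-1} k^{a^i}` as an element of `𝔽_N = ZMod N`. -/
def Mnum (N i : ℕ) : ZMod N :=
  ∏ k ∈ Finset.Icc 1 (N - 1), ∏ a ∈ Finset.Icc 1 (k - 1), (k : ZMod N) ^ (a ^ i)

/-- `S_i = ∏_{k=1}^{p-1} ((Mk)!)^{k^i}` with `M = (N-1)/p`, as an element of `ZMod N`. -/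
def Snum (p N i : ℕ) : ZMod N :=
  ∏ k ∈ Finset.Icc 1 (p - 1), (Nat.factorial ((N - 1) / p * k) : ZMod N) ^ (k ^ i)

/-- `A_m = ∏_{k=1}^{N-1} k^{k^m}` as an element of `ZMod N`. -/
def Anum (N m : ℕ) : ZMod N :=
  ∏ k ∈ Finset.Icc 1 (N - 1), (k : ZMod N) ^ (k ^ m)

/-- Merel's number `C = ∏_{k=1}^{(N-1)/2} k^k` as an element of `ZMod N`. -/
def MerelC (N : ℕ) : ZMod N :=
  ∏ k ∈ Finset.Icc 1 ((N - 1) / 2), (k : ZMod N) ^ k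

/-- `x` is a `p`-th power in `𝔽_N`. -/
def IsPthPow (p : ℕ) {N : ℕ} (x : ZMod N) : Prop :=
  ∃ y : ZMod N, y ^ p = x

section
open scoped TensorProduct

lemma aux_indep (k V : Type*) [Field k] [AddCommGroup V] [Module k V] [Module.Finite k V]
    {n : ℕ} (E : Fin n → Submodule k V) (U : Submodule k V) (hind : iSupIndep E)
    (hE : ∀ i, E i ≤ U) : ∑ i, Module.finrank k (E i) ≤ Module.finrank k U := by
  classical
  let f : (DirectSum (Fin n) fun i => E i) →ₗ[k] V := DirectSum.coeLinearMap E
  have hf : Function.Injective f := hind.dfinsupp_lsum_injective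
  have hr : ∀ x, f x ∈ U := by
    intro x
    have : f x ∈ LinearMap.range f := ⟨x, rfl⟩
    rw [show LinearMap.range f = _ from DirectSum.range_coeLinearMap] at this
    exact (iSup_le hE) this
  rw [← Module.finrank_directSum]
  exact LinearMap.finrank_le_finrank_of_injective (f := f.codRestrict _ hr)
    (fun a b h => hf (congrArg Subtype.val h))

lemma aux_pow_inj : Function.Injective (fun i : Fin 4 => (2 : ZMod 5) ^ (i : ℕ)) := by decide

lemma aux_linalg (V : Type*) [AddCommGroup V] [Module (ZMod 5) V] [Finite V]
    (s d : Module.End (ZMod 5) V) (hnil : (s - 1) ^ 4 = 0) (hd : d * s = s ^ 2 * d) :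
    Module.finrank (ZMod 5) (LinearMap.ker (d - 1)) ≤
      Module.finrank (ZMod 5) (LinearMap.ker (s - 1)) := by
  have : Fact (Nat.Prime 5) := ⟨by norm_num⟩
  have : Module.Finite (ZMod 5) V := Module.Finite.of_finite
  set t := s - 1 with ht
  have hdt : d * t = (t ^ 2 + 2 * t) * d := by
    have : s = t + 1 := by rw [ht]; abel
    rw [this] at hd
    have h2 : (t + 1) ^ 2 = t ^ 2 + 2 * t + 1 := by noncomm_ring
    rw [h2, mul_add, add_mul _ 1, mul_one, one_mul] at hd
    exact add_right_cancel hd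
  have hdti : ∀ i : ℕ, d * t ^ i = (t ^ 2 + 2 * t) ^ i * d := by
    intro i
    induction i with
    | zero => simp
    | succ k ih =>
      rw [pow_succ, ← mul_assoc, ih, mul_assoc, hdt, ← mul_assoc, ← pow_succ]
  -- W i
  let W : ℕ → Submodule (ZMod 5) V := fun i => LinearMap.ker (d - 1) ⊓ LinearMap.ker (t ^ i)
  let E : ℕ → Submodule (ZMod 5) V := fun i => (W (i + 1)).map (t ^ i)
  have hWE : ∀ i, Module.finrank (ZMod 5) (W (i + 1)) ≤
      Module.finrank (ZMod 5) (E i) + Module.finrank (ZMod 5) (W i) := by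
    intro i
    have h := LinearMap.finrank_range_add_finrank_ker ((t ^ i).domRestrict (W (i + 1)))
    rw [LinearMap.range_domRestrict] at h
    rw [← h]
    gcongr
    have : (LinearMap.ker ((t ^ i).domRestrict (W (i + 1)))).map (W (i + 1)).subtype ≤ W i := by
      rintro _ ⟨x, hx, rfl⟩
      refine ⟨x.2.1, ?_⟩
      simpa using hx
    calc _ = Module.finrank (ZMod 5)
          ((LinearMap.ker ((t ^ i).domRestrict (W (i + 1)))).map (W (i + 1)).subtype) :=
          (LinearEquiv.finrank_eq (Submodule.equivMapOfInjective _ (Submodule.injective_subtype _) _))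
      _ ≤ _ := Submodule.finrank_mono this
  have hW0 : W 0 = ⊥ := by
    simp [W, Module.End.one_eq_id, LinearMap.ker_id]
  have hW4 : W 4 = LinearMap.ker (d - 1) := by
    simp only [W, hnil, LinearMap.ker_zero, inf_top_eq]
  -- eigen
  have hEk : ∀ i, E i ≤ LinearMap.ker t := by
    rintro i _ ⟨x, hx, rfl⟩
    have : (t ^ (i + 1)) x = 0 := hx.2
    rw [LinearMap.mem_ker]
    rwa [← Module.End.mul_apply, ← pow_succ']
  have hEe : ∀ i, E i ≤ Module.End.eigenspace d ((2 : ZMod 5) ^ i) := by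
    rintro i _ ⟨x, hx, rfl⟩
    rw [Module.End.mem_eigenspace_iff]
    have h1 : d x = x := by
      have : (d - 1) x = 0 := hx.1
      simpa [sub_eq_zero] using this
    have h2 : (t ^ (i + 1)) x = 0 := hx.2
    rw [← Module.End.mul_apply, hdti, Module.End.mul_apply, h1]
    have h3 : (t ^ 2 + 2 * t) ^ i = t ^ i * (t + 2) ^ i := by
      rw [← (show Commute t (t + 2) from (Commute.refl t).add_right
        (by exact Nat.commute_cast t 2)).mul_pow]
      congr 1
      noncomm_ring
    have h4 : ∃ q : Module.End (ZMod 5) V, (t + 2) ^ i = q * t + (2 ^ i : Module.End (ZMod 5) V) := by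
      clear * -
      induction i with
      | zero => exact ⟨0, by simp⟩
      | succ k ih =>
        obtain ⟨q, hq⟩ := ih
        refine ⟨q * t + 2 * q + 2 ^ k, ?_⟩
        have hc : (2 : Module.End (ZMod 5) V) ^ k * t = t * 2 ^ k :=
          (by exact_mod_cast Nat.cast_commute (2 ^ k) t)
        have hc2 : (2 : Module.End (ZMod 5) V) * q = q * 2 := by
          exact_mod_cast Nat.cast_commute 2 q
        have hc3 : (2 : Module.End (ZMod 5) V) * t = t * 2 := by
          exact_mod_cast Nat.cast_commute 2 t
        rw [pow_succ, hq, pow_succ]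
        simp only [add_mul, mul_add, mul_assoc, hc2, hc3]
        abel
    obtain ⟨q, hq⟩ := h4
    have hcomm : t ^ i * (t + 2) ^ i = (t + 2) ^ i * t ^ i :=
      ((show Commute t (t + 2) from (Commute.refl t).add_right
        (by exact Nat.commute_cast t 2)).pow_pow i i)
    rw [h3, hcomm, hq, add_mul, mul_assoc, ← pow_succ', LinearMap.add_apply, Module.End.mul_apply,
      h2, map_zero, zero_add]
    have : (2 ^ i : Module.End (ZMod 5) V) = algebraMap (ZMod 5) _ (2 ^ i) := by
      rw [map_pow, map_ofNat]
    rw [this, Module.End.mul_apply, Module.algebraMap_end_apply]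
  have hind : iSupIndep (fun i : Fin 4 => E i) := by
    have h := (Module.End.eigenspaces_iSupIndep d).comp
      (f := fun i : Fin 4 => (2 : ZMod 5) ^ (i : ℕ)) aux_pow_inj
    exact h.mono (fun i => hEe i)
  have hsum : ∑ i : Fin 4, Module.finrank (ZMod 5) (E i) ≤ Module.finrank (ZMod 5) (LinearMap.ker t) := by
    exact aux_indep _ _ (fun i : Fin 4 => E i) _ hind (fun i => hEk i)
  rw [Fin.sum_univ_four] at hsum
  have h0 : Module.finrank (ZMod 5) (W 0) = 0 := by rw [hW0]; simp
  have a1 := hWE 0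
  have a2 := hWE 1
  have a3 := hWE 2
  have a4 := hWE 3
  rw [← hW4]
  simp only [Fin.val_zero, Fin.val_one, Fin.val_two] at hsum
  change _ + Module.finrank (ZMod 5) (E 3) ≤ _ at hsum
  change _ ≤ Module.finrank (ZMod 5) (E 3) + _ at a4
  change Module.finrank (ZMod 5) (W 4) ≤ _ at a4
  change Module.finrank (ZMod 5) (W 3) ≤ _ at a3
  change Module.finrank (ZMod 5) (W 2) ≤ _ at a2
  change Module.finrank (ZMod 5) (W 1) ≤ _ at a1
  omega

lemma aux_group (C : Type*) [CommGroup C] [Finite C] (σ δ : C →* C)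
    (hN : ∀ c, c * σ c * σ (σ c) * σ (σ (σ c)) * σ (σ (σ (σ c))) = 1)
    (hδ : ∀ c, δ (σ c) = σ (σ (δ c)))
    (T : Subgroup C) (hT5 : ∀ c ∈ T, c ^ 5 = 1) (hTδ : ∀ c ∈ T, δ c = c) :
    Nat.card T ≤ Nat.card {c : C // σ c = c} := by
  have : Fact (Nat.Prime 5) := ⟨by norm_num⟩
  let P : Subgroup C := (powMonoidHom 5 : C →* C).ker
  let V := Additive P
  let _ : Module (ZMod 5) V := AddCommGroup.zmodModule (n := 5) (by
    intro x
    apply Additive.toMul.injective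
    apply Subtype.ext
    exact x.toMul.2)
  have hP : ∀ φ : C →* C, ∀ c ∈ P, φ c ∈ P := by
    intro φ c hc
    rw [MonoidHom.mem_ker] at hc ⊢
    simp only [powMonoidHom_apply] at hc ⊢
    rw [← map_pow, hc, map_one]
  let L : (C →* C) → Module.End (ZMod 5) V := fun φ =>
    (MonoidHom.toAdditive ((φ.comp P.subtype).codRestrict P (fun c => hP φ c c.2))).toZModLinearMap 5
  have hL : ∀ φ (x : V), (((L φ x).toMul : P) : C) = φ (x.toMul : P) := fun _ _ => rfl
  have hext : ∀ x y : V, ((x.toMul : P) : C) = ((y.toMul : P) : C) → x = y :=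
    fun x y h => Additive.toMul.injective (Subtype.ext h)
  have key := aux_linalg V (L σ) (L δ) ?_ ?_
  · have e1 : Nat.card T ≤ Nat.card (LinearMap.ker (L δ - 1)) := by
      refine Nat.card_le_card_of_injective
        (fun c => ⟨Additive.ofMul ⟨c.1, by
          rw [MonoidHom.mem_ker]; exact hT5 c c.2⟩, ?_⟩) ?_
      · rw [LinearMap.mem_ker, LinearMap.sub_apply, sub_eq_zero]
        apply hext
        rw [hL]
        exact hTδ c c.2
      · intro a b h
        have := congrArg (fun z => ((Additive.toMul (z.1 : V) : P) : C)) h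
        exact Subtype.ext this
    have e2 : Nat.card (LinearMap.ker (L σ - 1)) ≤ Nat.card {c : C // σ c = c} := by
      refine Nat.card_le_card_of_injective
        (fun x => ⟨((x.1.toMul : P) : C), ?_⟩) ?_
      · have := x.2
        rw [LinearMap.mem_ker, LinearMap.sub_apply, sub_eq_zero] at this
        rw [← hL, this]
        rfl
      · intro a b h
        exact Subtype.ext (hext _ _ (congrArg (fun z : {c : C // σ c = c} => z.1) h))
    refine e1.trans (le_trans ?_ e2)
    have : Finite V := inferInstanceAs (Finite P)
    rw [Module.natCard_eq_pow_finrank (K := ZMod 5) (V := LinearMap.ker (L δ - 1)),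
      Module.natCard_eq_pow_finrank (K := ZMod 5) (V := LinearMap.ker (L σ - 1))]
    refine Nat.pow_le_pow_right ?_ key
    rw [Nat.card_zmod]; norm_num
  · have h5 : (5 : Module.End (ZMod 5) V) = 0 := by
      have : (5 : Module.End (ZMod 5) V) = algebraMap (ZMod 5) _ 5 := by rw [map_ofNat]
      rw [this, show (5 : ZMod 5) = 0 from rfl, map_zero]
    have hs : 1 + L σ + L σ ^ 2 + L σ ^ 3 + L σ ^ 4 = 0 := by
      refine LinearMap.ext fun x => hext _ _ ?_
      exact hN _
    have : (L σ - 1) ^ 4 = (1 + L σ + L σ ^ 2 + L σ ^ 3 + L σ ^ 4)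
       + 5 * (- L σ ^ 3 + L σ ^ 2 - L σ) := by noncomm_ring
    rw [this, hs, h5]; simp
  · refine LinearMap.ext fun x => hext _ _ ?_
    exact hδ _

lemma pRank_pow_le (G : Type*) [CommGroup G] [Finite G] :
    5 ^ (Module.finrank (ZMod 5) (ZMod 5 ⊗[ℤ] Additive G)) ≤
      Nat.card (powMonoidHom 5 : G →* G).ker := by
  have : Fact (Nat.Prime 5) := ⟨by norm_num⟩
  let f : Additive G →+ ZMod 5 ⊗[ℤ] Additive G :=
    ((TensorProduct.mk ℤ (ZMod 5) (Additive G)) 1).toAddMonoidHom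
  have hf : Function.Surjective f := by
    intro x
    induction x using TensorProduct.induction_on with
    | zero => exact ⟨0, map_zero f⟩
    | add x y hx hy =>
      obtain ⟨a, rfl⟩ := hx
      obtain ⟨b, rfl⟩ := hy
      exact ⟨a + b, map_add f a b⟩
    | tmul z a =>
      refine ⟨(z.val : ℤ) • a, ?_⟩
      change (1 : ZMod 5) ⊗ₜ[ℤ] ((z.val : ℤ) • a) = _
      rw [← TensorProduct.smul_tmul]
      congr 1
      simp
  have hfin : Finite (ZMod 5 ⊗[ℤ] Additive G) := Finite.of_surjective f hf
  have h0 := Module.natCard_eq_pow_finrank (K := ZMod 5) (V := ZMod 5 ⊗[ℤ] Additive G)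
  rw [Nat.card_zmod] at h0
  rw [← h0]
  -- card
  let g : G →* Multiplicative (ZMod 5 ⊗[ℤ] Additive G) := AddMonoidHom.toMultiplicativeRight f
  have hg : Function.Surjective g := hf
  have hker : (powMonoidHom 5 : G →* G).range ≤ g.ker := by
    rintro _ ⟨a, rfl⟩
    rw [MonoidHom.mem_ker]
    change (1 : ZMod 5) ⊗ₜ[ℤ] ((5 : ℕ) • Additive.ofMul a) = 0
    rw [← natCast_zsmul, ← TensorProduct.smul_tmul]
    have : ((5 : ℕ) : ℤ) • (1 : ZMod 5) = 0 := by
      rw [natCast_zsmul, nsmul_eq_mul, CharP.cast_eq_zero, zero_mul]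
    rw [this, TensorProduct.zero_tmul]
  have h1 : Nat.card (ZMod 5 ⊗[ℤ] Additive G) = g.ker.index := by
    rw [Subgroup.index_ker, MonoidHom.range_eq_top.mpr hg]
    exact (Nat.card_congr (Equiv.Set.univ _)).symm
  rw [h1]
  have h2 : (powMonoidHom 5 : G →* G).range.index = Nat.card (powMonoidHom 5 : G →* G).ker := by
    have a1 := (powMonoidHom 5 : G →* G).range.card_mul_index
    have a2 := (powMonoidHom 5 : G →* G).ker.card_mul_index
    rw [Subgroup.index_ker] at a2
    have : 0 < Nat.card (powMonoidHom 5 : G →* G).range := Nat.card_pos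
    apply Nat.eq_of_mul_eq_mul_left this
    rw [a1, mul_comm, a2]
  rw [← h2]
  exact Nat.le_of_dvd (Nat.pos_of_ne_zero Subgroup.FiniteIndex.index_ne_zero)
    (Subgroup.index_dvd_of_le hker)

lemma one_le_pRank (G : Type*) [CommGroup G] [Finite G] (p : ℕ) [Fact p.Prime]
    (f : G →* Multiplicative (ZMod p)) (g : G) (hg : f g ≠ 1) :
    1 ≤ (Module.finrank (ZMod p) (ZMod p ⊗[ℤ] Additive G)) := by
  let f' : Additive G →ₗ[ℤ] ZMod p := (MonoidHom.toAdditiveLeft f).toIntLinearMap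
  have : Module.Finite (ZMod p) (ZMod p ⊗[ℤ] Additive G) := by
    have : Module.Finite ℤ (Additive G) := Module.Finite.of_finite
    infer_instance
  rw [Nat.one_le_iff_ne_zero, ← Nat.pos_iff_ne_zero, Module.finrank_pos_iff_exists_ne_zero]
  refine ⟨(1 : ZMod p) ⊗ₜ[ℤ] (Additive.ofMul g), fun h => hg ?_⟩
  have := congrArg (TensorProduct.lift ((LinearMap.mul ℤ (ZMod p)).compl₂ f')) h
  rw [TensorProduct.lift.tmul, map_zero] at this
  simp at this
  exact this
end

section
/-- Abstract ambiguous class number bound. -/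
lemma aux_ambig {U I : Type*} [CommGroup U] [CommGroup I] (s Nm : U →* U) (S : I →* I)
    (dv : U →* I) (hdv : ∀ u, dv (s u) = S (dv u))
    (hH90 : Nm.ker = s.range)
    (hNmF : ∀ u, s (Nm u) = 1) (hF5 : ∀ u ∈ s.ker, Nm u = u ^ 5)
    (hNmE : ∀ c J, dv c = S J → dv (Nm c) = 1)
    (k q a : ℕ)
    (hk : (s.ker.map dv).relIndex S.ker ≤ k)
    (hq : (((dv.ker ⊓ s.ker).map (powMonoidHom 5))).relIndex (dv.ker ⊓ s.ker ⊓ Nm.range) ≤ q)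
    (hq0 : (((dv.ker ⊓ s.ker).map (powMonoidHom 5))).relIndex (dv.ker ⊓ s.ker ⊓ Nm.range) ≠ 0)
    (ha : a ≤ ((dv.ker ⊓ Nm.ker).map s).relIndex (dv.ker ⊓ Nm.ker)) :
    dv.range.relIndex (dv.range.comap S) * a ≤ q * k := by
  set E := dv.ker with hE
  set F := s.ker with hF
  set B := dv.range.comap S with hB
  set A := E ⊓ Nm.ker with hA
  have hNmE1 : ∀ c ∈ E, dv (Nm c) = 1 := fun c hc => hNmE c 1 (by rw [map_one]; exact hc)
  have hdB : dv.range ≤ B := by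
    rintro _ ⟨u, rfl⟩
    exact ⟨s u, hdv u⟩
  have hkB : S.ker ≤ B := by
    intro J hJ
    rw [MonoidHom.mem_ker] at hJ
    rw [hB, Subgroup.mem_comap, hJ]
    exact one_mem _
  -- (a)
  have ea : dv.range.relIndex B = dv.range.relIndex S.ker * (dv.range ⊔ S.ker).relIndex B := by
    rw [← Subgroup.relIndex_sup_left S.ker dv.range, Subgroup.relIndex_mul_relIndex _ _ _ le_sup_left
      (sup_le hdB hkB)]
  -- (c)
  have hdF : F.map dv ≤ S.ker ⊓ dv.range := by
    rintro _ ⟨u, hu, rfl⟩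
    refine ⟨?_, u, rfl⟩
    rw [SetLike.mem_coe, MonoidHom.mem_ker] at hu
    change S (dv u) = 1
    rw [← hdv, hu, map_one]
  have ec : (F.map dv).relIndex (S.ker ⊓ dv.range) * dv.range.relIndex S.ker =
      (F.map dv).relIndex S.ker := by
    rw [← Subgroup.inf_relIndex_left S.ker dv.range, Subgroup.relIndex_mul_relIndex _ _ _ hdF inf_le_left]
  -- (d)
  set D := E.comap s with hD
  have hDmap : D.map dv = S.ker ⊓ dv.range := by
    ext J
    constructor
    · rintro ⟨u, hu, rfl⟩
      refine ⟨?_, u, rfl⟩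
      change S (dv u) = 1
      rw [← hdv]
      exact hu
    · rintro ⟨h1, u, rfl⟩
      refine ⟨u, ?_, rfl⟩
      change S (dv u) = 1 at h1
      rw [← hdv] at h1
      exact h1
  have hFD : F ≤ D := by
    intro u hu
    rw [hF, MonoidHom.mem_ker] at hu
    rw [hD, Subgroup.mem_comap, hu]; exact one_mem _
  have hED : E ≤ D := by
    intro u hu
    rw [hE, MonoidHom.mem_ker] at hu
    rw [hD, Subgroup.mem_comap, hE, MonoidHom.mem_ker, hdv, hu, map_one]
  have hDs : D.map s = A := by
    ext v
    constructor
    · rintro ⟨u, hu, rfl⟩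
      refine ⟨hu, ?_⟩
      rw [hH90]; exact ⟨u, rfl⟩
    · rintro ⟨h1, h2⟩
      rw [hH90] at h2
      obtain ⟨u, rfl⟩ := h2
      exact ⟨u, h1, rfl⟩
  have ed : (F.map dv).relIndex (S.ker ⊓ dv.range) = (E.map s).relIndex A := by
    rw [← hDmap, ← hDs, Subgroup.relIndex_map_map, Subgroup.relIndex_map_map,
      sup_eq_left.mpr hED, sup_eq_left.mpr hFD, sup_comm]
  -- (e)
  set C := (B.map S).comap dv with hC
  have hSB : C.map dv = B.map S := by
    rw [hC, Subgroup.map_comap_eq, inf_eq_right]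
    rintro _ ⟨J, hJ, rfl⟩
    exact hJ
  have hSd : (dv.range ⊔ S.ker).map S = (s.range).map dv := by
    rw [Subgroup.map_sup, (Subgroup.map_eq_bot_iff _).mpr le_rfl, sup_bot_eq, MonoidHom.map_range,
      MonoidHom.map_range]
    congr 1
    ext u
    exact (hdv u).symm
  have hEC : E ≤ C := by
    intro u hu
    rw [hE, MonoidHom.mem_ker] at hu
    rw [hC, Subgroup.mem_comap, hu]; exact one_mem _
  have hsC : s.range ≤ C := by
    rintro _ ⟨u, rfl⟩
    rw [hC, Subgroup.mem_comap, hdv]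
    exact ⟨_, hdB ⟨u, rfl⟩, rfl⟩
  have ee : (dv.range ⊔ S.ker).relIndex B = (E.map Nm).relIndex (C.map Nm) := by
    have h1 := Subgroup.relIndex_map_map S (dv.range ⊔ S.ker) B
    rw [sup_eq_left.mpr (le_sup_right : S.ker ≤ dv.range ⊔ S.ker), sup_eq_left.mpr hkB] at h1
    rw [← h1, hSd, ← hSB, Subgroup.relIndex_map_map, Subgroup.relIndex_map_map, hH90,
      sup_eq_left.mpr hEC, sup_eq_left.mpr hsC, sup_comm]
  -- (f)
  have hEs : E.map s ≤ A := by
    rw [← hDs]; exact Subgroup.map_mono hED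
  have ef1 : (A.map s).relIndex (E.map s) * (E.map s).relIndex A = (A.map s).relIndex A :=
    Subgroup.relIndex_mul_relIndex _ _ _ (Subgroup.map_mono inf_le_left) hEs
  have hpow : (E ⊓ F).map (powMonoidHom 5) = (E ⊓ F).map Nm := by
    ext v
    constructor
    · rintro ⟨u, hu, rfl⟩
      exact ⟨u, hu, hF5 u hu.2⟩
    · rintro ⟨u, hu, rfl⟩
      exact ⟨u, hu, (hF5 u hu.2).symm⟩
  have ef2 : (A.map s).relIndex (E.map s) = ((E ⊓ F).map (powMonoidHom 5)).relIndex (E.map Nm) := by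
    rw [hpow]
    have h1 : A.map s = (Nm.comp E.subtype).ker.map (s.comp E.subtype) := by
      rw [← Subgroup.map_map]; congr 1
      rw [← MonoidHom.comap_ker, Subgroup.map_comap_eq, Subgroup.range_subtype]
    have h2 : (E ⊓ F).map Nm = (s.comp E.subtype).ker.map (Nm.comp E.subtype) := by
      rw [← Subgroup.map_map]; congr 1
      rw [← MonoidHom.comap_ker, Subgroup.map_comap_eq, Subgroup.range_subtype]
    have h3 : E.map s = (⊤ : Subgroup E).map (s.comp E.subtype) := by
      rw [← Subgroup.map_map, ← MonoidHom.range_eq_map, Subgroup.range_subtype]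
    have h4 : E.map Nm = (⊤ : Subgroup E).map (Nm.comp E.subtype) := by
      rw [← Subgroup.map_map, ← MonoidHom.range_eq_map, Subgroup.range_subtype]
    rw [h1, h2, h3, h4, Subgroup.relIndex_map_map, Subgroup.relIndex_map_map, top_sup_eq,
      top_sup_eq, sup_comm]
  -- (g)
  have g1 : (E ⊓ F).map (powMonoidHom 5) ≤ E.map Nm := by
    rw [hpow]; exact Subgroup.map_mono inf_le_left
  have g2 : E.map Nm ≤ C.map Nm := Subgroup.map_mono hEC
  have g3 : C.map Nm ≤ E ⊓ F ⊓ Nm.range := by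
    rintro _ ⟨c, ⟨J, hJ, hc⟩, rfl⟩
    exact ⟨⟨hNmE c J hc.symm, hNmF c⟩, c, rfl⟩
  have eg1 := Subgroup.relIndex_mul_relIndex _ _ _ g1 g2
  have eg2 := Subgroup.relIndex_mul_relIndex _ _ _ (g1.trans g2) g3
  rw [ea, ee]
  rw [ed] at ec
  rw [ef2] at ef1
  rw [← eg1] at eg2
  set m := ((E ⊓ F).map (powMonoidHom 5)).relIndex (E.map Nm)
  set b := (E.map Nm).relIndex (C.map Nm)
  set h := (E.map s).relIndex A
  set y := dv.range.relIndex S.ker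
  set c := (C.map Nm).relIndex (E ⊓ F ⊓ Nm.range)
  rw [← eg2] at hq hq0
  rw [← ec] at hk
  have hc : 1 ≤ c := Nat.one_le_iff_ne_zero.mpr (right_ne_zero_of_mul hq0)
  calc y * b * a ≤ y * b * (m * h) := by rw [ef1]; gcongr
    _ = (m * b) * (h * y) := by ring
    _ ≤ (m * b * c) * (h * y) := by
      exact Nat.mul_le_mul_right _ (Nat.le_mul_of_pos_right _ hc)
    _ ≤ q * k := by gcongr

lemma aux_step {A : Type*} [CommGroup A] (s : A →* A) (H : Subgroup A)
    (hH : H.index ≠ 0) (hs : s.range.index ≠ 0) :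
    (H.map s).index ≠ 0 ∧ (H.map s).index ≤ H.index * s.range.index := by
  rw [Subgroup.index_map]
  have : (H ⊔ s.ker).index ∣ H.index := Subgroup.index_dvd_of_le le_sup_left
  exact ⟨mul_ne_zero (fun h => hH (by rw [h] at this; exact zero_dvd_iff.mp this)) hs,
    Nat.mul_le_mul_right _ (Nat.le_of_dvd (Nat.pos_of_ne_zero hH) this)⟩

lemma aux_unit_index {A : Type*} [CommGroup A] (s : A →* A)
    (h1 : ∀ a, ∃ b, s (s (s (s a))) = b ^ 5) (h2 : ∀ a, ∃ b, a ^ 5 = s b)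
    (h0 : (powMonoidHom 5 : A →* A).range.index ≠ 0)
    (h9 : 5 ^ 9 ≤ (powMonoidHom 5 : A →* A).range.index) :
    26 ≤ s.range.index := by
  have hle : (powMonoidHom 5 : A →* A).range ≤ s.range := by
    rintro _ ⟨a, rfl⟩
    obtain ⟨b, hb⟩ := h2 a
    exact ⟨b, hb.symm⟩
  have hs : s.range.index ≠ 0 := fun h => h0 (by
    have := Subgroup.index_dvd_of_le hle
    rw [h] at this; exact zero_dvd_iff.mp this)
  obtain ⟨a1, b1⟩ := aux_step s s.range hs hs
  obtain ⟨a2, b2⟩ := aux_step s _ a1 hs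
  obtain ⟨a3, b3⟩ := aux_step s _ a2 hs
  have hle2 : ((s.range.map s).map s).map s ≤ (powMonoidHom 5 : A →* A).range := by
    rintro _ ⟨_, ⟨_, ⟨_, ⟨a, rfl⟩, rfl⟩, rfl⟩, rfl⟩
    obtain ⟨b, hb⟩ := h1 a
    exact ⟨b, hb.symm⟩
  have := Nat.le_of_dvd (Nat.pos_of_ne_zero a3) (Subgroup.index_dvd_of_le hle2)
  by_contra hlt
  have hlt : s.range.index ≤ 25 := by omega
  have : 5 ^ 9 ≤ 25 * 25 * 25 * 25 := by
    calc 5 ^ 9 ≤ _ := h9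
      _ ≤ _ := this
      _ ≤ _ := b3
      _ ≤ (s.range.index * s.range.index * s.range.index) * s.range.index := by
        gcongr
        exact b2.trans (by gcongr)
      _ ≤ 25 * 25 * 25 * 25 := by gcongr
  norm_num at this
end

section
open scoped TensorProduct

lemma one_le_pRank_of_not_surj (G : Type*) [CommGroup G] [Finite G] (g : G) (hg : ∀ h : G, h ^ 5 ≠ g) :
    1 ≤ (Module.finrank (ZMod 5) (ZMod 5 ⊗[ℤ] Additive G)) := by
  have : Fact (Nat.Prime 5) := ⟨by norm_num⟩
  let H := (powMonoidHom 5 : G →* G).range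
  have h5 : ∀ x : Additive (G ⧸ H), 5 • x = 0 := by
    intro x
    obtain ⟨y, hy⟩ := QuotientGroup.mk_surjective (s := H) x.toMul
    have : x = Additive.ofMul (QuotientGroup.mk y : G ⧸ H) := by rw [hy]; rfl
    rw [this, ← ofMul_pow, ← QuotientGroup.mk_pow]
    rw [(QuotientGroup.eq_one_iff (N := H) (y ^ 5)).2 (show y ^ 5 ∈ H from ⟨y, rfl⟩)]
    rfl
  let _ : Module (ZMod 5) (Additive (G ⧸ H)) := AddCommGroup.zmodModule h5
  have hne : Additive.ofMul (QuotientGroup.mk g : G ⧸ H) ≠ 0 := by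
    intro h
    have h' : (QuotientGroup.mk g : G ⧸ H) = 1 := h
    rw [QuotientGroup.eq_one_iff] at h'
    obtain ⟨y, hy⟩ := h'
    exact hg y hy
  have : ¬ ∀ φ : Module.Dual (ZMod 5) (Additive (G ⧸ H)), φ (Additive.ofMul (QuotientGroup.mk g : G ⧸ H)) = 0 := by
    intro h
    exact hne ((Module.forall_dual_apply_eq_zero_iff (ZMod 5) _).1 h)
  push Not at this
  obtain ⟨φ, hφ⟩ := this
  let f : G →* Multiplicative (ZMod 5) :=
    (AddMonoidHom.toMultiplicativeRight φ.toAddMonoidHom).comp (QuotientGroup.mk' H)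
  exact one_le_pRank G 5 f g hφ

open NumberField in
lemma norm_mod (K : Type*) [Field K] [NumberField K] (hKdeg : Module.finrank ℚ K = 5)
    (N : ℕ) [Fact N.Prime] (a : ℤ) (y z : 𝓞 K) (hy : y ^ 5 = (N : 𝓞 K) * z) :
    ((Algebra.norm ℤ ((a : 𝓞 K) + y) : ℤ) : ZMod N) = (a : ZMod N) ^ 5 := by
  classical
  let b := Module.finBasis ℤ (𝓞 K)
  have hc : Fintype.card (Fin (Module.finrank ℤ (𝓞 K))) = 5 := by
    rw [Fintype.card_fin, NumberField.RingOfIntegers.rank, hKdeg]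
  set M := Algebra.leftMulMatrix b y with hM
  let M' : Matrix _ _ (ZMod N) := (Int.castRingHom (ZMod N)).mapMatrix M
  have hnil : IsNilpotent M' := by
    refine ⟨5, ?_⟩
    rw [← map_pow, ← map_pow, hy, map_mul, map_natCast, map_mul, map_natCast]
    have : ((N : ℕ) : Matrix (Fin (Module.finrank ℤ (𝓞 K))) (Fin (Module.finrank ℤ (𝓞 K))) (ZMod N)) = 0 := by
      ext i j
      rw [← Matrix.diagonal_natCast]
      simp [Matrix.diagonal_apply]
    rw [this, zero_mul]
  have hch := Matrix.isNilpotent_charpoly_sub_pow_of_isNilpotent hnil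
  have hch := hch.eq_zero
  rw [hc, sub_eq_zero] at hch
  have he : (M'.charpoly).eval (-(a : ZMod N)) = (-(a : ZMod N)) ^ 5 := by rw [hch]; simp
  rw [Matrix.eval_charpoly] at he
  have h1 : (Matrix.scalar (Fin (Module.finrank ℤ (𝓞 K)))) (-(a : ZMod N)) - M' =
      - (Int.castRingHom (ZMod N)).mapMatrix (Algebra.leftMulMatrix b ((a : 𝓞 K) + y)) := by
    rw [map_add, map_add, map_intCast, map_intCast, map_neg, neg_add, sub_eq_add_neg]
    simp
    rfl
  rw [h1, Matrix.det_neg, hc, ← RingHom.map_det, ← Algebra.norm_eq_matrix_det] at he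
  have h2 : (-1 : ZMod N) ^ 5 = -1 := by norm_num
  rw [h2] at he
  have h3 : (-(a : ZMod N)) ^ 5 = - (a : ZMod N) ^ 5 := by ring
  rw [h3] at he
  simpa using he

/-- `n` is a power of `N` times a nonzero fifth power residue mod `N`. -/
def FifthRes (N : ℕ) (n : ℤ) : Prop :=
  ∃ (v : ℕ) (u : ℤ) (b : ZMod N), n = (N : ℤ) ^ v * u ∧ b ≠ 0 ∧ (u : ZMod N) = b ^ 5

lemma FifthRes.neg {N : ℕ} {n : ℤ} (h : FifthRes N n) : FifthRes N (-n) := by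
  obtain ⟨v, u, b, h1, h2, h3⟩ := h
  exact ⟨v, -u, -b, by rw [h1]; ring, neg_ne_zero.2 h2, by push_cast; rw [h3]; ring⟩

lemma FifthRes.pow {N : ℕ} [Fact N.Prime] (n : ℕ) (h : n ≠ 0) : FifthRes N ((n : ℤ) ^ 5) := by
  obtain ⟨v, u, hu, hv⟩ := Nat.exists_eq_pow_mul_and_not_dvd h N (Fact.out : N.Prime).ne_one
  refine ⟨v * 5, (u : ℤ) ^ 5, (u : ZMod N), by rw [hv]; push_cast; ring, ?_, by push_cast; rfl⟩
  rwa [Ne, ZMod.natCast_eq_zero_iff]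

lemma FifthRes.natAbs {N : ℕ} {n : ℤ} (h : FifthRes N n) : FifthRes N (n.natAbs : ℤ) := by
  rcases Int.natAbs_eq n with h' | h'
  · rw [← h']; exact h
  · have := h.neg
    have h'' : -n = n.natAbs := by omega
    rwa [h''] at this

lemma FifthRes.quot {N : ℕ} [Fact N.Prime] {m n k : ℤ} {q : ℕ} (hq : ¬ N ∣ q)
    (hm : FifthRes N m) (hn : FifthRes N n) (hk : FifthRes N k) (h : m * q = n * k) :
    ∃ b : ZMod N, b ^ 5 = q := by
  obtain ⟨v, u, b, h1, h2, h3⟩ := hm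
  obtain ⟨v', u', b', h1', h2', h3'⟩ := hn
  obtain ⟨w, t, c, h4, h5, h6⟩ := hk
  have hNp : Prime (N : ℤ) := Nat.prime_iff_prime_int.1 Fact.out
  have hnd : ∀ (z : ℤ), (z : ZMod N) ≠ 0 → ¬ (N : ℤ) ∣ z := by
    intro z hz h
    exact hz ((ZMod.intCast_zmod_eq_zero_iff_dvd z N).2 h)
  have hq' : ((q : ℤ) : ZMod N) ≠ 0 := by
    rw [Int.cast_natCast, Ne, ZMod.natCast_eq_zero_iff]; exact hq
  have e1 : (N : ℤ) ^ v * (u * q) = (N : ℤ) ^ (v' + w) * (u' * t) := by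
    rw [h1, h1', h4] at h; rw [pow_add]; linear_combination h
  have d1 := hnd (u * q) (by push_cast; rw [h3]; exact mul_ne_zero (pow_ne_zero _ h2) (by exact_mod_cast hq'))
  have d2 := hnd (u' * t) (by push_cast; rw [h3', h6]; exact mul_ne_zero (pow_ne_zero _ h2') (pow_ne_zero _ h5))
  have hN0 : (N : ℤ) ≠ 0 := hNp.ne_zero
  have hvw : v = v' + w := by
    rcases lt_trichotomy v (v' + w) with hlt | heq | hgt
    · obtain ⟨d, hd⟩ := Nat.exists_eq_add_of_lt hlt
      exfalso; apply d1
      rw [hd, show v + d + 1 = v + (d + 1) by ring, pow_add, mul_assoc] at e1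
      rw [mul_left_cancel₀ (pow_ne_zero _ hN0) e1]
      exact Dvd.dvd.mul_right (dvd_pow_self _ (by omega)) _
    · exact heq
    · obtain ⟨d, hd⟩ := Nat.exists_eq_add_of_lt hgt
      exfalso; apply d2
      rw [hd, show v' + w + d + 1 = (v' + w) + (d + 1) by ring, pow_add _ (v' + w), mul_assoc] at e1
      rw [← mul_left_cancel₀ (pow_ne_zero _ hN0) e1]
      exact Dvd.dvd.mul_right (dvd_pow_self _ (by omega)) _
  rw [← hvw] at e1
  have e2 := mul_left_cancel₀ (pow_ne_zero _ hN0) e1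
  have e3 := congrArg (Int.cast : ℤ → ZMod N) e2
  push_cast at e3
  rw [h3, h3', h6] at e3
  refine ⟨b' * c / b, ?_⟩
  field_simp
  linear_combination -e3

lemma intCast_surj_of_prime_card {R : Type*} [CommRing R] (h : (Nat.card R).Prime) :
    Function.Surjective (Int.cast : ℤ → R) := by
  have : Fact (Nat.card R).Prime := ⟨h⟩
  have : Finite R := Nat.finite_of_card_ne_zero h.ne_zero
  have : Nontrivial R := Finite.one_lt_card_iff_nontrivial.1 h.one_lt
  rcases AddSubgroup.eq_bot_or_eq_top_of_prime_card (Int.castAddHom R).range with h1 | h1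
  · exfalso
    have : (1 : R) ∈ (Int.castAddHom R).range := ⟨1, by simp⟩
    rw [h1, AddSubgroup.mem_bot] at this
    exact one_ne_zero this
  · exact AddMonoidHom.range_eq_top.1 h1

open NumberField in
lemma fifthRes_norm (K : Type*) [Field K] [NumberField K] (hKdeg : Module.finrank ℚ K = 5)
    (N : ℕ) [Fact N.Prime] (α : 𝓞 K) (hα : α ^ 5 = (N : 𝓞 K)) :
    ∀ (n : ℕ) (x : 𝓞 K), (Algebra.norm ℤ x).natAbs = n → x ≠ 0 → FifthRes N (Algebra.norm ℤ x) := by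
  have hNp : N.Prime := Fact.out
  have hnα : Algebra.norm ℤ α = N := by
    have h : (Algebra.norm ℤ α) ^ 5 = (N : ℤ) ^ 5 := by
      rw [← map_pow, hα]
      have := Algebra.norm_algebraMap_of_basis (Module.finBasis ℤ (𝓞 K)) (N : ℤ)
      rw [Fintype.card_fin, NumberField.RingOfIntegers.rank, hKdeg] at this
      simpa using this
    exact (Odd.strictMono_pow (by decide : Odd 5)).injective h
  have hcard : Ideal.absNorm (Ideal.span {α}) = N := by
    rw [Ideal.absNorm_span_singleton, hnα]; simp
  -- every element is congruent to an integer mod α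
  have hrep : ∀ x : 𝓞 K, ∃ (a : ℤ) (y : 𝓞 K), x = a + α * y := by
    intro x
    have hs := intCast_surj_of_prime_card (R := 𝓞 K ⧸ Ideal.span {α}) (by
      rw [← Submodule.cardQuot_apply, ← Ideal.absNorm_apply, hcard]; exact hNp)
    obtain ⟨a, ha⟩ := hs (Ideal.Quotient.mk _ x)
    rw [← map_intCast (Ideal.Quotient.mk (Ideal.span {α})), eq_comm, Ideal.Quotient.mk_eq_mk_iff_sub_mem,
      Ideal.mem_span_singleton] at ha
    obtain ⟨y, hy⟩ := ha
    exact ⟨a, y, by rw [← hy]; ring⟩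
  intro n
  induction n using Nat.strong_induction_on with
  | _ n ih =>
    intro x hx hx0
    obtain ⟨a, y, rfl⟩ := hrep x
    have hmod := norm_mod K hKdeg N a (α * y) (y ^ 5) (by rw [mul_pow, hα])
    by_cases ha : (a : ZMod N) = 0
    · rw [ZMod.intCast_zmod_eq_zero_iff_dvd] at ha
      obtain ⟨c, rfl⟩ := ha
      set z : 𝓞 K := α ^ 4 * c + y with hz
      have hxz : (((N * c : ℤ) : 𝓞 K) + α * y) = α * z := by
        rw [hz]; push_cast; rw [← hα]; ring
      rw [hxz] at hx hx0 ⊢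
      have hz0 : z ≠ 0 := right_ne_zero_of_mul hx0
      have hzn : Algebra.norm ℤ z ≠ 0 := Algebra.norm_ne_zero_iff.2 hz0
      have := ih (Algebra.norm ℤ z).natAbs (by
        rw [← hx, map_mul, hnα, Int.natAbs_mul, Int.natAbs_natCast]
        have := Int.natAbs_pos.2 hzn
        nlinarith [hNp.two_le]) z rfl hz0
      obtain ⟨v, u, b, h1, h2, h3⟩ := this
      exact ⟨v + 1, u, b, by rw [map_mul, hnα, h1]; ring, h2, h3⟩
    · exact ⟨0, _, a, by simp, ha, hmod⟩

lemma isUnit_two_zmod5 : IsUnit (2 : ZMod 5) := by decide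

lemma exists_q (N : ℕ) (hN : N.Prime) (hNmod : N % 5 = 1) :
    ∃ q : ℕ, q.Prime ∧ ¬ N ∣ q ∧ q % 5 = 2 ∧ ∀ b : ZMod N, b ^ 5 ≠ q := by
  have : Fact N.Prime := ⟨hN⟩
  have : Fact (Nat.Prime 5) := ⟨by norm_num⟩
  obtain ⟨g, hg⟩ : ∃ g : (ZMod N)ˣ, ∀ h, h ^ 5 ≠ g := by
    by_contra! hc
    have hs : Function.Surjective (fun h : (ZMod N)ˣ => h ^ 5) := hc
    have hi := Finite.injective_iff_surjective.2 hs
    obtain ⟨x, hx⟩ := exists_prime_orderOf_dvd_card' (G := (ZMod N)ˣ) 5 (by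
      rw [Nat.card_eq_fintype_card, ZMod.card_units]; omega)
    have h1 : x ^ 5 = 1 := by rw [← hx]; exact pow_orderOf_eq_one x
    have : x = 1 := hi (by simpa using h1)
    rw [this, orderOf_one] at hx
    omega
  have hco : Nat.Coprime 5 N := by
    rw [Nat.coprime_primes (by norm_num) hN]; rintro rfl; omega
  let e := ZMod.chineseRemainder hco
  let w : ZMod (5 * N) := e.symm (2, (g : ZMod N))
  have hw : IsUnit w := by
    apply IsUnit.map
    rw [Prod.isUnit_iff]
    exact ⟨isUnit_two_zmod5, g.isUnit⟩
  have : NeZero (5 * N) := ⟨by have := hN.pos; omega⟩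
  obtain ⟨q, hq, hqp, hqw⟩ := Nat.forall_exists_prime_gt_and_eq_mod hw N
  have he : e (q : ZMod (5 * N)) = (2, (g : ZMod N)) := by rw [hqw]; exact e.apply_symm_apply _
  rw [map_natCast] at he
  have h1 : ((q : ℕ) : ZMod 5) = ((2 : ℕ) : ZMod 5) := congrArg Prod.fst he
  have h2 : (q : ZMod N) = g := congrArg Prod.snd he
  refine ⟨q, hqp, ?_, ?_, ?_⟩
  · intro h
    rw [Nat.prime_dvd_prime_iff_eq hN hqp] at h; omega
  · rw [ZMod.natCast_eq_natCast_iff] at h1; exact h1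
  · intro b hb
    have hb0 : b ≠ 0 := by
      rintro rfl
      rw [h2] at hb
      exact g.ne_zero (by rw [← hb]; norm_num)
    exact hg (Units.mk0 b hb0) (by ext; simp [hb, h2])

lemma minpoly_alpha (N : ℕ) (hN : N.Prime) (K : Type*) [Field K] [CharZero K] [Algebra ℚ K]
    (α : K) (hα : α ^ 5 = (N : K)) :
    minpoly ℚ α = Polynomial.X ^ 5 - Polynomial.C (N : ℚ) := by
  have hirr : Irreducible (Polynomial.X ^ 5 - Polynomial.C (N : ℚ)) := by
    apply X_pow_sub_C_irreducible_of_prime (by norm_num)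
    intro b hb
    have hbi : IsIntegral ℤ b := by
      refine IsIntegral.of_pow (n := 5) (by norm_num) ?_
      rw [hb]; exact map_natCast (algebraMap ℤ ℚ) N ▸ isIntegral_algebraMap
    obtain ⟨z, rfl⟩ := IsIntegrallyClosed.isIntegral_iff.1 hbi
    have hz : z ^ 5 = N := by
      have : (algebraMap ℤ ℚ) z = (z : ℚ) := rfl
      rw [this] at hb
      exact_mod_cast hb
    have hp : Prime (N : ℤ) := Nat.prime_iff_prime_int.1 hN
    exact hp.irreducible.not_isUnit.elim (by
      have := (hz ▸ hp.irreducible)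
      exact absurd this (not_irreducible_pow (by norm_num)))
  refine (minpoly.eq_of_irreducible_of_monic hirr ?_ ?_).symm
  · simp [hα]
  · exact Polynomial.monic_X_pow_sub_C _ (by norm_num)

open NumberField in
lemma exists_ideal (N : ℕ) (hN : N.Prime) (hNmod : N % 5 = 1)
    (K : Type*) [Field K] [NumberField K]
    (a : 𝓞 K) (ha : a ^ 5 = (N : 𝓞 K)) (hKdeg : Module.finrank ℚ K = 5) :
    ∃ (q f : ℕ) (I : Ideal (𝓞 K)), q.Prime ∧ ¬ N ∣ q ∧
      (∀ b : ZMod N, b ^ 5 ≠ q) ∧ f.Coprime 5 ∧ Ideal.absNorm I = q ^ f := by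
  obtain ⟨q, hq, hqN, hq5, hqr⟩ := exists_q N hN hNmod
  have : Fact q.Prime := ⟨hq⟩
  have hnq : Ideal.absNorm (Ideal.span {(q : 𝓞 K)}) = q ^ 5 := by
    rw [Ideal.absNorm_span_singleton]
    have := Algebra.norm_algebraMap_of_basis (Module.finBasis ℤ (𝓞 K)) (q : ℤ)
    rw [Fintype.card_fin, NumberField.RingOfIntegers.rank, hKdeg] at this
    rw [show (q : 𝓞 K) = algebraMap ℤ (𝓞 K) (q : ℤ) by simp, this]
    simp [Int.natAbs_pow]
  have hne : Ideal.span {(q : 𝓞 K)} ≠ ⊤ := by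
    intro h
    rw [h, Ideal.absNorm_top] at hnq
    exact (Nat.one_lt_pow (by norm_num : (5:ℕ) ≠ 0) hq.one_lt).ne hnq
  obtain ⟨P, hP, hPq⟩ := Ideal.exists_le_maximal _ hne
  have hdvd := Ideal.absNorm_dvd_absNorm_of_le hPq
  rw [hnq, Nat.dvd_prime_pow hq] at hdvd
  obtain ⟨f, hf, hPf⟩ := hdvd
  by_cases hf5 : f.Coprime 5
  · exact ⟨q, f, P, hq, hqN, hqr, hf5, hPf⟩
  exfalso
  have hf5 : f = 5 := by
    have : f ≠ 0 := by
      rintro rfl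
      rw [pow_zero, Ideal.absNorm_eq_one_iff] at hPf
      exact hP.ne_top hPf
    rw [Nat.coprime_comm, Nat.Prime.coprime_iff_not_dvd (by norm_num)] at hf5
    omega
  subst hf5
  -- P = (q)
  have hPe : P = Ideal.span {(q : 𝓞 K)} := by
    obtain ⟨J, hJ⟩ := Ideal.dvd_iff_le.2 hPq
    have h1 := congrArg Ideal.absNorm hJ
    rw [map_mul, hnq, hPf] at h1
    have h2 : Ideal.absNorm J = 1 := by
      have : 0 < q ^ 5 := pow_pos hq.pos 5
      nlinarith
    rw [Ideal.absNorm_eq_one_iff] at h2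
    rw [hJ, h2, Ideal.mul_top]
  let k := 𝓞 K ⧸ P
  let _ : Field k := Ideal.Quotient.field P
  have hkc : Nat.card k = q ^ 5 := by
    rw [← hPf, Ideal.absNorm_apply, Submodule.cardQuot_apply]
  have : Finite k := Nat.finite_of_card_ne_zero (by rw [hkc]; exact pow_ne_zero _ hq.ne_zero)
  have hinj : ∀ x y : k, x ^ 5 = y ^ 5 → y ≠ 0 → x = y := by
    intro x y hxy hy
    have h1 : (x / y) ^ 5 = 1 := by rw [div_pow, hxy, div_self (pow_ne_zero _ hy)]
    have hxy0 : x / y ≠ 0 := by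
      intro h; rw [h] at h1; norm_num at h1
    have h2 : (Units.mk0 _ hxy0) ^ 5 = 1 := by ext; simpa using h1
    have h3 : Nat.Coprime 5 (Nat.card kˣ) := by
      rw [Nat.card_units, hkc, Nat.Prime.coprime_iff_not_dvd (by norm_num)]
      have : q ^ 5 % 5 = 2 := by rw [Nat.pow_mod, hq5]
      omega
    have h4 : Units.mk0 _ hxy0 = 1 := by
      rw [← orderOf_eq_one_iff]
      have d1 := orderOf_dvd_of_pow_eq_one h2
      have d2 := orderOf_dvd_natCard (Units.mk0 _ hxy0)
      exact Nat.eq_one_of_dvd_coprimes h3 d1 d2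
    have h5 : x / y = 1 := by simpa using congrArg Units.val h4
    exact (div_eq_one_iff_eq hy).1 h5
  obtain ⟨c, hc⟩ : ∃ c : ℤ, ((c : ZMod q)) ^ 5 = N := by
    have hi : Function.Injective (fun h : (ZMod q)ˣ => h ^ 5) := by
      intro x y hxy
      have h3 : Nat.Coprime (Nat.card (ZMod q)ˣ) 5 := by
        rw [Nat.card_eq_fintype_card, ZMod.card_units, Nat.coprime_comm, Nat.Prime.coprime_iff_not_dvd (by norm_num)]
        omega
      exact (powCoprime h3).injective hxy
    have hs := Finite.injective_iff_surjective.1 hi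
    have hN0 : (N : ZMod q) ≠ 0 := by
      rw [Ne, ZMod.natCast_eq_zero_iff, Nat.prime_dvd_prime_iff_eq hq hN]
      rintro rfl; exact hqN dvd_rfl
    obtain ⟨u, hu⟩ := hs (Units.mk0 _ hN0)
    obtain ⟨c, hc⟩ := ZMod.intCast_surjective (u : ZMod q)
    refine ⟨c, ?_⟩
    rw [hc]
    simpa using congrArg Units.val hu
  have hNq : ¬ (q : ℤ) ∣ N := by
    intro h
    have h : q ∣ N := by exact_mod_cast h
    rw [Nat.prime_dvd_prime_iff_eq hq hN] at h
    exact hqN (h ▸ dvd_rfl)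
  have hqP : Prime (q : ℤ) := Nat.prime_iff_prime_int.1 hq
  have hcq : (q : ℤ) ∣ c ^ 5 - N := by
    rw [← ZMod.intCast_zmod_eq_zero_iff_dvd]; push_cast; rw [hc, sub_self]
  have hcnd : ¬ (q : ℤ) ∣ c := by
    intro h
    apply hNq
    have := dvd_sub (dvd_pow h (by norm_num : (5:ℕ) ≠ 0)) hcq
    rwa [sub_sub_cancel] at this
  have hzP : ∀ z : ℤ, (q : ℤ) ∣ z → Ideal.Quotient.mk P (z : 𝓞 K) = 0 := by
    rintro z ⟨d, rfl⟩
    rw [Ideal.Quotient.eq_zero_iff_mem]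
    push_cast
    exact Ideal.mul_mem_right _ _ (hPq (Ideal.mem_span_singleton_self _))
  have hac : Ideal.Quotient.mk P a = Ideal.Quotient.mk P (c : 𝓞 K) := by
    apply hinj
    · rw [← map_pow, ← map_pow, ha, eq_comm, ← sub_eq_zero, ← map_sub]
      have := hzP _ hcq
      push_cast at this
      exact this
    · intro h0
      rw [Ideal.Quotient.eq_zero_iff_mem, hPe, Ideal.mem_span_singleton] at h0
      have h1 : (q : ℤ) ^ 5 ∣ c ^ 5 := by
        have h2 := map_dvd (Algebra.norm ℤ) h0
        have e1 := Algebra.norm_algebraMap_of_basis (Module.finBasis ℤ (𝓞 K)) (q : ℤ)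
        have e2 := Algebra.norm_algebraMap_of_basis (Module.finBasis ℤ (𝓞 K)) c
        rw [Fintype.card_fin, NumberField.RingOfIntegers.rank, hKdeg] at e1 e2
        rw [show (q : 𝓞 K) = algebraMap ℤ (𝓞 K) (q : ℤ) by simp,
          show (c : 𝓞 K) = algebraMap ℤ (𝓞 K) c by simp, e1, e2] at h2
        exact h2
      exact hcnd (hqP.dvd_of_dvd_pow ((dvd_pow_self _ (by norm_num)).trans h1))
  rw [Ideal.Quotient.mk_eq_mk_iff_sub_mem, hPe, Ideal.mem_span_singleton] at hac
  obtain ⟨y, hy⟩ := hac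
  -- traces
  have htr : Algebra.trace ℚ K (a : K) = 0 := by
    rw [trace_eq_finrank_mul_minpoly_nextCoeff, minpoly_alpha N hN K (a : K) (by exact_mod_cast congrArg (algebraMap (𝓞 K) K) ha)]
    have : (Polynomial.X ^ 5 - Polynomial.C (N : ℚ)).nextCoeff = 0 := by
      rw [Polynomial.nextCoeff_of_natDegree_pos (by rw [Polynomial.natDegree_X_pow_sub_C]; norm_num),
        Polynomial.natDegree_X_pow_sub_C]
      simp [Polynomial.coeff_X_pow]
    rw [this]; simp
  have hyK : (a : K) - (c : K) = (q : K) * (y : K) := by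
    have := congrArg (algebraMap (𝓞 K) K) hy
    simpa using this
  have h1 : Algebra.trace ℚ K ((a : K) - (c : K)) = - (5 * c) := by
    rw [map_sub, htr, show (c : K) = algebraMap ℚ K (c : ℚ) by simp, Algebra.trace_algebraMap, hKdeg]
    simp
  rw [hyK, show (q : K) = algebraMap ℚ K (q : ℚ) by simp, ← Algebra.smul_def, map_smul,
    ← Algebra.coe_trace_int] at h1
  have h2 : (q : ℤ) * Algebra.trace ℤ (𝓞 K) y = -(5 * c) := by
    rw [smul_eq_mul] at h1; exact_mod_cast h1
  have h3 : (q : ℤ) ∣ 5 * c := by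
    rw [← dvd_neg, ← h2]; exact dvd_mul_right _ _
  rcases hqP.dvd_or_dvd h3 with h4 | h4
  · have : q ∣ 5 := by exact_mod_cast h4
    rw [Nat.prime_dvd_prime_iff_eq hq (by norm_num)] at this
    subst this
    omega
  · exact hcnd h4

open NumberField Pointwise in
lemma lower_bound (N : ℕ) (hN : N.Prime) (hNmod : N % 5 = 1)
    (K : Type*) [Field K] [NumberField K]
    (α : K) (hα : α ^ 5 = (N : K)) (hKdeg : Module.finrank ℚ K = 5) :
    1 ≤ Module.finrank (ZMod 5) (ZMod 5 ⊗[ℤ] Additive (ClassGroup (𝓞 K))) := by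
  have : Fact N.Prime := ⟨hN⟩
  have hInt : IsIntegral ℤ α := by
    refine IsIntegral.of_pow (n := 5) (by norm_num) ?_
    rw [hα]; exact map_natCast (algebraMap ℤ K) N ▸ isIntegral_algebraMap
  let a : 𝓞 K := ⟨α, hInt⟩
  have ha : a ^ 5 = (N : 𝓞 K) := by
    apply RingOfIntegers.ext
    push_cast
    exact hα
  -- an ideal whose norm is not a fifth power residue
  obtain ⟨q, f, I, hq, hqN, hqr, hf, hI⟩ : ∃ (q f : ℕ) (I : Ideal (𝓞 K)), q.Prime ∧ ¬ N ∣ q ∧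
      (∀ b : ZMod N, b ^ 5 ≠ q) ∧ f.Coprime 5 ∧ Ideal.absNorm I = q ^ f := by
    exact exists_ideal N hN hNmod K a ha hKdeg
  have hI0 : I ∈ nonZeroDivisors (Ideal (𝓞 K)) := by
    rw [← Ideal.absNorm_ne_zero_iff_mem_nonZeroDivisors, hI]
    exact pow_ne_zero _ hq.ne_zero
  refine one_le_pRank_of_not_surj _ (ClassGroup.mk0 ⟨I, hI0⟩) ?_
  intro c hc
  obtain ⟨J, rfl⟩ := ClassGroup.mk0_surjective c
  rw [← map_pow, eq_comm, ClassGroup.mk0_eq_mk0_iff] at hc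
  obtain ⟨x, y, hx, hy, hxy⟩ := hc
  have h := congrArg Ideal.absNorm hxy
  rw [map_mul, map_mul, SubmonoidClass.coe_pow, map_pow, Ideal.absNorm_span_singleton,
    Ideal.absNorm_span_singleton, hI] at h
  have hfx := (fifthRes_norm K hKdeg N a ha _ x rfl hx).natAbs
  have hfy := (fifthRes_norm K hKdeg N a ha _ y rfl hy).natAbs
  have hJ : Ideal.absNorm (J : Ideal (𝓞 K)) ≠ 0 := Ideal.absNorm_ne_zero_of_nonZeroDivisors J
  obtain ⟨b, hb⟩ := FifthRes.quot (q := q ^ f) (fun h' => hqN (hN.dvd_of_dvd_pow h')) hfx hfy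
    (FifthRes.pow _ hJ) (by exact_mod_cast h)
  -- q is then a fifth power
  have hq0 : (q : ZMod N) ≠ 0 := by rwa [Ne, ZMod.natCast_eq_zero_iff]
  have hgcd := Int.gcd_eq_gcd_ab f 5
  rw [show Int.gcd (f : ℤ) 5 = 1 from by exact_mod_cast hf] at hgcd
  refine hqr (b ^ (Int.gcdA f 5) * (q : ZMod N) ^ (Int.gcdB f 5)) ?_
  have hb0 : b ≠ 0 := by
    rintro rfl
    have : (q : ZMod N) ^ f = 0 := by
      have := hb.symm
      push_cast at this
      rw [this]; norm_num
    exact pow_ne_zero _ hq0 this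
  rw [mul_pow, ← zpow_natCast, ← zpow_natCast, ← zpow_mul, ← zpow_mul, mul_comm _ ((5:ℕ):ℤ), zpow_mul b,
    zpow_natCast b, hb]
  push_cast
  rw [← zpow_natCast, ← zpow_mul, ← zpow_add₀ hq0]
  have : (f : ℤ) * Int.gcdA f 5 + Int.gcdB f 5 * 5 = 1 := by
    push_cast at hgcd; rw [hgcd]; ring
  rw [this, zpow_one]
end

section
open NumberField Pointwise

section GenFL
variable (F L : Type*) [Field F] [NumberField F] [Field L] [NumberField L] [Algebra F L] [IsGalois F L]

lemma ideal_pow_inj {R : Type*} [CommRing R] [IsDedekindDomain R] {I J : Ideal R} {n : ℕ} (hn : n ≠ 0)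
    (h : I ^ n = J ^ n) : I = J :=
  le_antisymm (Ideal.dvd_iff_le.1 ((UniqueFactorizationMonoid.pow_dvd_pow_iff_dvd hn).1 h.symm.dvd)) 
    (Ideal.dvd_iff_le.1 ((UniqueFactorizationMonoid.pow_dvd_pow_iff_dvd hn).1 h.dvd))

lemma prod_smul_eq_map_relNorm (I : Ideal (𝓞 L)) :
    ∏ g : Gal(L/F), g • I = (Ideal.relNorm (𝓞 F) I).map (algebraMap (𝓞 F) (𝓞 L)) := by
  by_cases hI : I = ⊥
  · subst hI
    rw [Ideal.relNorm_bot, Ideal.map_bot]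
    apply Finset.prod_eq_zero (Finset.mem_univ 1)
    rw [one_smul]; rfl
  have hI0 : I ∈ nonZeroDivisors (Ideal (𝓞 L)) := mem_nonZeroDivisors_of_ne_zero hI
  set h := Fintype.card (ClassGroup (𝓞 L)) with hh
  have hh0 : h ≠ 0 := Fintype.card_ne_zero
  have hp : (ClassGroup.mk0 ⟨I, hI0⟩) ^ h = 1 := pow_card_eq_one
  rw [← map_pow, ClassGroup.mk0_eq_one_iff] at hp
  obtain ⟨a, ha⟩ := hp
  have ha' : I ^ h = Ideal.span {a} := ha
  apply ideal_pow_inj hh0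
  rw [← Finset.prod_pow, ← Ideal.map_pow, ← map_pow, ha', Ideal.relNorm_singleton, Ideal.map_span,
    Set.image_singleton]
  have h1 : ∀ g : Gal(L/F), (g • I) ^ h = Ideal.span {g • a} := by
    intro g
    rw [← smul_pow', ha', Ideal.pointwise_smul_def, Ideal.map_span, Set.image_singleton]; rfl
  simp_rw [h1]
  rw [Ideal.prod_span_singleton]
  congr 2
  apply RingOfIntegers.ext
  have := Algebra.algebraMap_intNorm (A := 𝓞 F) (K := F) (L := L) (B := 𝓞 L) a
  have h2 : algebraMap (𝓞 L) L (algebraMap (𝓞 F) (𝓞 L) (Algebra.intNorm (𝓞 F) (𝓞 L) a)) =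
     algebraMap F L (algebraMap (𝓞 F) F (Algebra.intNorm (𝓞 F) (𝓞 L) a)) := rfl
  change _ = algebraMap (𝓞 L) L (algebraMap (𝓞 F) (𝓞 L) (Algebra.intNorm (𝓞 F) (𝓞 L) a))
  rw [h2, this, Algebra.norm_eq_prod_automorphisms]
  exact map_prod (algebraMap (𝓞 L) L) _ _

lemma ram_eq_card_inertia (p : Ideal (𝓞 F)) (P : Ideal (𝓞 L)) [P.LiesOver p] [P.IsPrime] [p.IsPrime]
    (hp : p ≠ ⊥) : p.ramificationIdx' P = Nat.card (P.inertia Gal(L/F)) := by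
  have : p.IsMaximal := Ideal.IsPrime.isMaximal ‹_› hp
  have : Finite (𝓞 F ⧸ p) := Ideal.finiteQuotientOfFreeOfNeBot p hp
  have : Finite p.ResidueField := Finite.of_surjective _ 
    (Ideal.bijective_algebraMap_quotient_residueField p).surjective
  rw [Ideal.card_inertia_eq_ramificationIdxIn (R := 𝓞 F) p P,
    Ideal.ramificationIdxIn_eq_ramificationIdx p P Gal(L/F), Ideal.ramificationIdx'_eq_ramificationIdx p P hp]

lemma ideal_pow_of_mult {R : Type*} [CommRing R] [IsDedekindDomain R] (I : Ideal R) (hI : I ≠ ⊥)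
    (h : ∀ v : IsDedekindDomain.HeightOneSpectrum R, 5 ∣ multiplicity v.asIdeal I) :
    ∃ J : Ideal R, I = J ^ 5 := by
  choose f hf using h
  have := Ideal.finprod_heightOneSpectrum_pow_multiplicity hI
  have hs : (Function.mulSupport fun v : IsDedekindDomain.HeightOneSpectrum R => v.asIdeal ^ f v).Finite := by
    refine Set.Finite.subset (Ideal.hasFiniteMulSupport hI) ?_
    intro v hv
    rw [Function.mem_mulSupport] at hv ⊢
    intro h
    apply hv
    apply ideal_pow_inj (n := 5) (by norm_num)
    rw [one_pow, ← pow_mul, mul_comm, ← hf, ← h,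
      IsDedekindDomain.HeightOneSpectrum.maxPowDividing_eq_pow_multiplicity hI]
  refine ⟨∏ᶠ v : IsDedekindDomain.HeightOneSpectrum R, v.asIdeal ^ f v, ?_⟩
  rw [finprod_pow hs]
  conv_lhs => rw [← this]
  congr 1
  ext1 v
  rw [← pow_mul, hf, mul_comm]

lemma invariant_descends [IsPrincipalIdealRing (𝓞 F)] (h5 : Module.finrank F L = 5)
    (I : Ideal (𝓞 L)) (hI : I ≠ ⊥) (hinv : ∀ g : Gal(L/F), g • I = I)
    (hc : ∀ p : IsDedekindDomain.HeightOneSpectrum (𝓞 F), ∃ P : Ideal (𝓞 L), P.LiesOver p.asIdeal ∧ P.IsPrime ∧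
      (P.inertia Gal(L/F) = ⊥ ∨ 5 ∣ multiplicity P I)) :
    ∃ c : 𝓞 F, I = Ideal.span {algebraMap (𝓞 F) (𝓞 L) c} := by
  have hcard : Nat.card Gal(L/F) = 5 := by rw [IsGalois.card_aut_eq_finrank, h5]
  have hpow : I ^ 5 = (Ideal.relNorm (𝓞 F) I).map (algebraMap (𝓞 F) (𝓞 L)) := by
    rw [← prod_smul_eq_map_relNorm, Finset.prod_congr rfl (fun g _ => hinv g), Finset.prod_const,
      Finset.card_univ, ← Nat.card_eq_fintype_card, hcard]
  set B := Ideal.relNorm (𝓞 F) I with hB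
  have hB0 : B ≠ ⊥ := by rwa [hB, Ne, Ideal.relNorm_eq_bot_iff]
  obtain ⟨J, hJ⟩ := ideal_pow_of_mult B hB0 (by
    intro v
    obtain ⟨P, hP1, hP2, hP3⟩ := hc v
    have hPbot : P ≠ ⊥ := Ideal.ne_bot_of_liesOver_of_ne_bot v.ne_bot P
    have hirrP : Irreducible P := (Ideal.prime_of_isPrime hPbot hP2).irreducible
    have hirrv : Irreducible v.asIdeal := v.irreducible
    have hm := Ideal.IsDedekindDomain.emultiplicity_map_eq_ramificationIdx'_mul (S := 𝓞 L) hB0 hirrv hirrP hPbot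
    have hf1 : FiniteMultiplicity v.asIdeal B := FiniteMultiplicity.of_prime_left hirrv.prime hB0
    have hf2 : FiniteMultiplicity P I := FiniteMultiplicity.of_prime_left hirrP.prime hI
    rw [← hpow, emultiplicity_pow hirrP.prime, hf1.emultiplicity_eq_multiplicity, hf2.emultiplicity_eq_multiplicity,
      ram_eq_card_inertia F L v.asIdeal P v.ne_bot] at hm
    have hm' : 5 * multiplicity P I = Nat.card (P.inertia Gal(L/F)) * multiplicity v.asIdeal B := by
      exact_mod_cast hm
    have hd : Nat.card (P.inertia Gal(L/F)) ∣ 5 := hcard ▸ Subgroup.card_subgroup_dvd_card _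
    rcases hP3 with h | ⟨m, h⟩
    · rw [h, Subgroup.card_bot, one_mul] at hm'
      exact ⟨_, hm'.symm⟩
    · rw [h] at hm'
      rcases (Nat.dvd_prime (by norm_num)).1 hd with h' | h' <;> rw [h'] at hm' <;> omega)
  obtain ⟨c, hcJ⟩ := IsPrincipalIdealRing.principal J
  refine ⟨c, ideal_pow_inj (n := 5) (by norm_num) ?_⟩
  rw [hpow, hJ, hcJ, Ideal.map_pow]
  congr 1
  change Ideal.map _ (Ideal.span {c}) = _
  rw [Ideal.map_span, Set.image_singleton]
end GenFL
end

section
open NumberField Pointwise nonZeroDivisors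

section FrAct
variable {L : Type*} [Field L] [NumberField L]

/-- action of a field automorphism on fractional ideals -/
noncomputable def frEquiv (g : L ≃+* L) : FractionalIdeal (𝓞 L)⁰ L ≃+* FractionalIdeal (𝓞 L)⁰ L :=
  FractionalIdeal.ringEquivOfRingEquiv L L (RingOfIntegers.mapRingEquiv g)

lemma isFrac_ringEquiv (g : L ≃+* L) (x : L) :
    IsFractionRing.ringEquivOfRingEquiv (K := L) (L := L) (RingOfIntegers.mapRingEquiv g) x = g x := by
  obtain ⟨a, b, hb, rfl⟩ := IsFractionRing.div_surjective (A := 𝓞 L) x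
  rw [map_div₀, map_div₀, IsFractionRing.ringEquivOfRingEquiv_algebraMap,
    IsFractionRing.ringEquivOfRingEquiv_algebraMap]
  rfl

lemma frEquiv_spanSingleton (g : L ≃+* L) (x : L) :
    frEquiv g (FractionalIdeal.spanSingleton (𝓞 L)⁰ x) = FractionalIdeal.spanSingleton (𝓞 L)⁰ (g x) := by
  rw [frEquiv, FractionalIdeal.ringEquivOfRingEquiv_spanSingleton, isFrac_ringEquiv]

lemma mem_frEquiv (g : L ≃+* L) (I : FractionalIdeal (𝓞 L)⁰ L) (y : L) :
    y ∈ frEquiv g I ↔ g.symm y ∈ I := by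
  have key : ∀ (z : L) (J : FractionalIdeal (𝓞 L)⁰ L), z ∈ J ↔ FractionalIdeal.spanSingleton (𝓞 L)⁰ z + J = J := by
    intro z J
    rw [← FractionalIdeal.spanSingleton_le_iff_mem, ← FractionalIdeal.sup_eq_add, sup_eq_right]
  rw [iff_comm, key, key, ← (frEquiv g).injective.eq_iff, map_add, frEquiv_spanSingleton, RingEquiv.apply_symm_apply]

/-- action on invertible fractional ideals -/
noncomputable def frAct (g : L ≃+* L) : (FractionalIdeal (𝓞 L)⁰ L)ˣ →* (FractionalIdeal (𝓞 L)⁰ L)ˣ :=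
  Units.map (frEquiv g).toMonoidHom

lemma frAct_coe (g : L ≃+* L) (I : (FractionalIdeal (𝓞 L)⁰ L)ˣ) :
    (frAct g I : FractionalIdeal (𝓞 L)⁰ L) = frEquiv g I := rfl

lemma frAct_trans (g h : L ≃+* L) (I) : frAct h (frAct g I) = frAct (g.trans h) I := by
  ext1
  rw [frAct_coe, frAct_coe, frAct_coe]
  ext y
  rw [mem_frEquiv, mem_frEquiv, mem_frEquiv]; rfl

lemma frEquiv_coeIdeal (g : L ≃+* L) (I : Ideal (𝓞 L)) :
    frEquiv g (I : FractionalIdeal (𝓞 L)⁰ L) = (I.map (RingOfIntegers.mapRingEquiv g) : Ideal (𝓞 L)) := by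
  ext y
  rw [mem_frEquiv, FractionalIdeal.mem_coeIdeal, FractionalIdeal.mem_coeIdeal]
  constructor
  · rintro ⟨a, ha, hay⟩
    refine ⟨RingOfIntegers.mapRingEquiv g a, Ideal.mem_map_of_mem _ ha, ?_⟩
    rw [← RingEquiv.apply_symm_apply g y, ← hay]; rfl
  · rintro ⟨a, ha, rfl⟩
    rw [Ideal.mem_map_of_equiv] at ha
    obtain ⟨b, hb, rfl⟩ := ha
    refine ⟨b, hb, ?_⟩
    exact (RingEquiv.symm_apply_apply g (b : L)).symm

lemma frAct_principal (g : L ≃+* L) (x : Lˣ) :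
    frAct g (toPrincipalIdeal (𝓞 L) L x) = toPrincipalIdeal (𝓞 L) L (Units.map (g : L →* L) x) := by
  ext1
  rw [frAct_coe, coe_toPrincipalIdeal, frEquiv_spanSingleton, coe_toPrincipalIdeal]; rfl

lemma frAct_le (g : L ≃+* L) : (toPrincipalIdeal (𝓞 L) L).range ≤ (toPrincipalIdeal (𝓞 L) L).range.comap (frAct g) := by
  rintro _ ⟨x, rfl⟩
  exact ⟨_, (frAct_principal g x).symm⟩

variable (L) in
/-- the class group as a quotient of the group of fractional ideals of `L` -/
abbrev CG := (FractionalIdeal (𝓞 L)⁰ L)ˣ ⧸ (toPrincipalIdeal (𝓞 L) L).range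

/-- action on the class group -/
noncomputable def clAct (g : L ≃+* L) : CG L →* CG L := QuotientGroup.map _ _ (frAct g) (frAct_le g)

lemma clAct_mk (g : L ≃+* L) (I : (FractionalIdeal (𝓞 L)⁰ L)ˣ) :
    clAct g (I : CG L) = ((frAct g I : (FractionalIdeal (𝓞 L)⁰ L)ˣ) : CG L) := rfl

instance : Finite (CG L) := Finite.of_equiv _ (ClassGroup.equiv (R := 𝓞 L) L).toEquiv

lemma CG_exists (c : CG L) : ∃ I : (Ideal (𝓞 L))⁰, c = ((FractionalIdeal.mk0 L I : (FractionalIdeal (𝓞 L)⁰ L)ˣ) : CG L) := by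
  obtain ⟨I, hI⟩ := ClassGroup.mk0_surjective ((ClassGroup.equiv (R := 𝓞 L) L).symm c)
  refine ⟨I, ?_⟩
  have := ClassGroup.equiv_mk0 L I
  rw [hI, MulEquiv.apply_symm_apply] at this
  exact this

lemma card_fixed {I : Type*} [CommGroup I] (R : Subgroup I) (Φ : I →* I) (h : R ≤ R.comap Φ) :
    Nat.card {c : I ⧸ R // QuotientGroup.map R R Φ h c = c} = R.relIndex (R.comap (Φ / MonoidHom.id I)) := by
  have hR : (QuotientGroup.mk' R).ker = R := QuotientGroup.ker_mk' R
  conv_rhs => lhs; rw [← hR]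
  rw [Subgroup.relIndex_ker]
  apply Nat.card_congr
  refine Equiv.subtypeEquivRight ?_
  intro c
  induction c using QuotientGroup.induction_on with
  | H z =>
  rw [Subgroup.mem_map, QuotientGroup.map_mk]
  have key : ∀ w : I, w ∈ R.comap (Φ / MonoidHom.id I) ↔ ((Φ w : I) : I ⧸ R) = w := by
    intro w
    rw [Subgroup.mem_comap, eq_comm, QuotientGroup.eq, MonoidHom.div_apply, div_eq_inv_mul]; rfl
  constructor
  · intro hz
    exact ⟨z, (key z).2 hz, rfl⟩
  · rintro ⟨w, hw, hwz⟩
    rw [key] at hw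
    have hwz' : (w : I ⧸ R) = z := hwz
    have := congrArg (QuotientGroup.map R R Φ h) hwz'
    rw [QuotientGroup.map_mk, QuotientGroup.map_mk] at this
    rw [← this, hw, hwz']

lemma card_fixed_cl (g : L ≃+* L) : Nat.card {c : CG L // clAct g c = c} =
   (toPrincipalIdeal (𝓞 L) L).range.relIndex ((toPrincipalIdeal (𝓞 L) L).range.comap (frAct g / MonoidHom.id _)) :=
  card_fixed _ _ _

end FrAct

section ClK
variable (K L : Type*) [Field K] [NumberField K] [Field L] [NumberField L] [Algebra K L]

lemma exists_torsion (h4 : Module.finrank K L = 4) :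
    ∃ T : Subgroup (CG L), (∀ c ∈ T, c ^ 5 = 1) ∧ (∀ δ : L ≃ₐ[K] L, ∀ c ∈ T, clAct (δ : L ≃+* L) c = c) ∧
      Nat.card T = Nat.card (powMonoidHom 5 : ClassGroup (𝓞 K) →* ClassGroup (𝓞 K)).ker := by
  set j : ClassGroup (𝓞 K) →* CG L := (ClassGroup.equiv (R := 𝓞 L) L).toMonoidHom.comp (ClassGroup.extendedHom (𝓞 K) (𝓞 L)) with hj
  have hj0 : ∀ I : (Ideal (𝓞 K))⁰, j (ClassGroup.mk0 I) = ((FractionalIdeal.mk0 L (ClassGroup.extendedIdeal (𝓞 K) (𝓞 L) I) : (FractionalIdeal (𝓞 L)⁰ L)ˣ) : CG L) := by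
    intro I
    rw [hj, MonoidHom.comp_apply, ClassGroup.extendedHom_mk0]
    exact ClassGroup.equiv_mk0 L _
  refine ⟨(powMonoidHom 5 : ClassGroup (𝓞 K) →* ClassGroup (𝓞 K)).ker.map j, ?_, ?_, ?_⟩
  · rintro _ ⟨c, hc, rfl⟩
    have hc' : c ^ 5 = 1 := hc
    rw [← map_pow, hc', map_one]
  · rintro δ _ ⟨c, hc, rfl⟩
    obtain ⟨I, rfl⟩ := ClassGroup.mk0_surjective c
    rw [hj0, clAct_mk]
    congr 1
    ext1
    rw [frAct_coe, FractionalIdeal.coe_mk0, frEquiv_coeIdeal]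
    congr 1
    change Ideal.map _ (Ideal.map _ _) = Ideal.map _ _
    have hcomp : ((RingOfIntegers.mapRingEquiv (δ : L ≃+* L)) : 𝓞 L →+* 𝓞 L).comp (algebraMap (𝓞 K) (𝓞 L)) = algebraMap (𝓞 K) (𝓞 L) := by
      ext x
      exact δ.commutes x
    conv_rhs => rw [← hcomp]
    rw [← Ideal.map_map]; rfl
  · have hinj : Function.Injective (j.comp (powMonoidHom 5 : ClassGroup (𝓞 K) →* ClassGroup (𝓞 K)).ker.subtype) := by
      rw [injective_iff_map_eq_one]
      rintro ⟨c, hc⟩ h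
      have hc' : c ^ 5 = 1 := hc
      have h' : j c = 1 := h
      obtain ⟨I, rfl⟩ := ClassGroup.mk0_surjective c
      rw [hj, MonoidHom.comp_apply, ClassGroup.extendedHom_mk0] at h'
      have h2 : ClassGroup.mk0 (ClassGroup.extendedIdeal (𝓞 K) (𝓞 L) I) = 1 :=
        (ClassGroup.equiv (R := 𝓞 L) L).injective (h'.trans (map_one _).symm)
      rw [ClassGroup.mk0_eq_one_iff] at h2
      obtain ⟨a, ha⟩ := h2
      have ha' : Ideal.map (algebraMap (𝓞 K) (𝓞 L)) I.1 = Ideal.span {a} := ha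
      have h3 := congrArg (Ideal.relNorm (𝓞 K)) ha'
      rw [Ideal.relNorm_algebraMap, Ideal.relNorm_singleton] at h3
      have h4' : ClassGroup.mk0 I ^ 4 = 1 := by
        rw [← map_pow, ClassGroup.mk0_eq_one_iff]
        refine ⟨Algebra.intNorm (𝓞 K) (𝓞 L) a, ?_⟩
        rw [← Ideal.submodule_span_eq] at h3
        rw [← h3]
        rw [show Module.finrank (𝓞 K) (𝓞 L) = 4 from
          (IsFractionRing.finrank_eq (𝓞 K) K (𝓞 L) L).symm.trans h4]
        rfl
      apply Subtype.ext
      change ClassGroup.mk0 I = 1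
      rw [pow_succ, h4', one_mul] at hc'
      exact hc'
    rw [← Nat.card_range_of_injective hinj]
    apply Nat.card_congr
    refine Equiv.setCongr ?_
    ext c
    constructor
    · rintro ⟨d, hd, rfl⟩; exact ⟨⟨d, hd⟩, rfl⟩
    · rintro ⟨⟨d, hd⟩, rfl⟩; exact ⟨d, hd, rfl⟩
end ClK
end

section
open NumberField Pointwise nonZeroDivisors

lemma pow_bij5 {G : Type*} [Group G] [Fintype G] (hG : Nat.card G = 5) (σ : G) (hσ : σ ≠ 1) :
    Function.Bijective (fun i : Fin 5 => σ ^ (i : ℕ)) := by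
  have ho : orderOf σ = 5 := by
    have : Fact (Nat.Prime 5) := ⟨by norm_num⟩
    apply orderOf_eq_prime _ hσ
    rw [← hG]; exact pow_card_eq_one'
  rw [Fintype.bijective_iff_injective_and_card]
  refine ⟨?_, ?_⟩
  · intro i j h
    have h' : σ ^ (i : ℕ) = σ ^ (j : ℕ) := h
    rw [pow_inj_mod, ho, Nat.mod_eq_of_lt i.2, Nat.mod_eq_of_lt j.2] at h'
    exact Fin.ext h'
  · rw [Fintype.card_fin, ← hG, Nat.card_eq_fintype_card]

lemma prod_gal5 {G M : Type*} [Group G] [Fintype G] [CommMonoid M] (hG : Nat.card G = 5) (σ : G) (hσ : σ ≠ 1)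
    (f : G → M) : ∏ g, f g = f 1 * f σ * f (σ ^ 2) * f (σ ^ 3) * f (σ ^ 4) := by
  rw [← Function.Bijective.prod_comp (pow_bij5 hG σ hσ), Fin.prod_univ_five]
  simp

lemma zpowers5 {G : Type*} [Group G] [Fintype G] (hG : Nat.card G = 5) (σ : G) (hσ : σ ≠ 1) (x : G) :
    x ∈ Subgroup.zpowers σ := by
  obtain ⟨i, rfl⟩ := (pow_bij5 hG σ hσ).2 x
  exact Subgroup.npow_mem_zpowers σ _

section
variable (F K L : Type*) [Field F] [NumberField F] [Field L] [NumberField L] [Algebra F L] [IsGalois F L]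
  [Field K] [NumberField K] [Algebra K L]

lemma map_mapRingEquiv (I : Ideal (𝓞 L)) (g : L ≃+* L) (g' : Gal(L/F)) (hg : ∀ x, g x = g' x) :
    I.map (RingOfIntegers.mapRingEquiv g) = g' • I := by
  have : (RingOfIntegers.mapRingEquiv g : 𝓞 L →+* 𝓞 L) = (MulSemiringAction.toRingHom Gal(L/F) (𝓞 L) g') := by
    ext x
    exact hg x
  have h2 : g' • I = I.map (MulSemiringAction.toRingHom Gal(L/F) (𝓞 L) g') := Ideal.pointwise_smul_def _
  rw [h2, ← this]
  rfl

lemma frAct_smul (I : (Ideal (𝓞 L))⁰) (g : L ≃+* L) (g' : Gal(L/F)) (hg : ∀ x, g x = g' x) :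
    ((frAct g (FractionalIdeal.mk0 L I) : 
      (FractionalIdeal (𝓞 L)⁰ L)ˣ) : FractionalIdeal (𝓞 L)⁰ L) = ((g' • I.1 : Ideal (𝓞 L)) : FractionalIdeal (𝓞 L)⁰ L) := by
  rw [frAct_coe, FractionalIdeal.coe_mk0, frEquiv_coeIdeal, map_mapRingEquiv F L _ g g' hg]

lemma gal_prod_principal [IsPrincipalIdealRing (𝓞 F)] (h5 : Module.finrank F L = 5)
    (σ : Gal(L/F)) (hσ : σ ≠ 1) (I : (Ideal (𝓞 L))⁰) (g1 g2 g3 g4 : L ≃+* L) (h1 : ∀ x, g1 x = σ x)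
    (h2 : ∀ x, g2 x = (σ ^ 2) x) (h3 : ∀ x, g3 x = (σ ^ 3) x) (h4 : ∀ x, g4 x = (σ ^ 4) x) :
    FractionalIdeal.mk0 L I * frAct g1 (FractionalIdeal.mk0 L I) * frAct g2 (FractionalIdeal.mk0 L I) *
    frAct g3 (FractionalIdeal.mk0 L I) * frAct g4 (FractionalIdeal.mk0 L I) ∈ (toPrincipalIdeal (𝓞 L) L).range := by
  have hcard : Nat.card Gal(L/F) = 5 := by rw [IsGalois.card_aut_eq_finrank, h5]
  have hp := prod_smul_eq_map_relNorm F L I.1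
  rw [prod_gal5 hcard σ hσ, one_smul] at hp
  obtain ⟨⟨a, ha⟩⟩ := IsPrincipalIdealRing.principal (Ideal.relNorm (𝓞 F) I.1)
  rw [ha, Ideal.submodule_span_eq, Ideal.map_span, Set.image_singleton] at hp
  rw [mem_principal_ideals_iff]
  refine ⟨algebraMap (𝓞 L) L (algebraMap (𝓞 F) (𝓞 L) a), ?_⟩
  simp only [Units.val_mul]
  rw [frAct_smul F L I g1 σ h1, frAct_smul F L I g2 _ h2, frAct_smul F L I g3 _ h3,
    frAct_smul F L I g4 _ h4, FractionalIdeal.coe_mk0]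
  rw [← FractionalIdeal.coeIdeal_span_singleton, ← hp]
  simp only [FractionalIdeal.coeIdeal_mul]

open scoped TensorProduct in
lemma rank_le_fixed [IsPrincipalIdealRing (𝓞 F)] (h5 : Module.finrank F L = 5) (h4 : Module.finrank K L = 4)
    (σ : Gal(L/F)) (hσ : σ ≠ 1) (δ : Gal(L/K)) (hδ : ∀ x, δ (σ x) = σ (σ (δ x))) :
    5 ^ (Module.finrank (ZMod 5) (ZMod 5 ⊗[ℤ] Additive (ClassGroup (𝓞 K)))) ≤
     (toPrincipalIdeal (𝓞 L) L).range.relIndex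
       ((toPrincipalIdeal (𝓞 L) L).range.comap (frAct (σ : L ≃+* L) / MonoidHom.id _)) := by
  obtain ⟨T, hT5, hTδ, hT⟩ := exists_torsion K L h4
  refine (pRank_pow_le _).trans ?_
  rw [← hT, ← card_fixed_cl]
  have hcard : Nat.card Gal(L/F) = 5 := by rw [IsGalois.card_aut_eq_finrank, h5]
  refine aux_group (CG L) (clAct (σ : L ≃+* L)) (clAct (δ : L ≃+* L)) ?_ ?_ T hT5 (hTδ δ)
  · intro c
    obtain ⟨I, rfl⟩ := CG_exists c
    simp only [clAct_mk, frAct_trans]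
    rw [← QuotientGroup.mk_mul, ← QuotientGroup.mk_mul, ← QuotientGroup.mk_mul, ← QuotientGroup.mk_mul,
      QuotientGroup.eq_one_iff]
    exact gal_prod_principal F L h5 σ hσ I _ _ _ _ (fun _ => rfl) (fun _ => rfl) (fun _ => rfl) (fun _ => rfl)
  · intro c
    obtain ⟨I, rfl⟩ := CG_exists c
    simp only [clAct_mk, frAct_trans]
    congr 3
    ext x
    exact hδ x
end
end

section
open NumberField Pointwise nonZeroDivisors

section
variable (F L : Type*) [Field F] [NumberField F] [Field L] [NumberField L] [Algebra F L] [IsGalois F L]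

lemma norm5 (h5 : Module.finrank F L = 5) (σ : Gal(L/F)) (hσ : σ ≠ 1) (c : L) :
    algebraMap F L (Algebra.norm F c) = c * σ c * σ (σ c) * σ (σ (σ c)) * σ (σ (σ (σ c))) := by
  have hcard : Nat.card Gal(L/F) = 5 := by rw [IsGalois.card_aut_eq_finrank, h5]
  rw [Algebra.norm_eq_prod_automorphisms, prod_gal5 hcard σ hσ]
  rfl

lemma sigma5 (h5 : Module.finrank F L = 5) (σ : Gal(L/F)) (c : L) :
    σ (σ (σ (σ (σ c)))) = c := by
  have hcard : Nat.card Gal(L/F) = 5 := by rw [IsGalois.card_aut_eq_finrank, h5]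
  have : σ ^ 5 = 1 := by rw [← hcard]; exact pow_card_eq_one'
  exact DFunLike.congr_fun this c

lemma hilbert90_5 (h5 : Module.finrank F L = 5) (σ : Gal(L/F)) (hσ : σ ≠ 1) (c : Lˣ)
    (hc : Algebra.norm F (c : L) = 1) : ∃ y : Lˣ, (c : L) = σ y / y := by
  have hcard : Nat.card Gal(L/F) = 5 := by rw [IsGalois.card_aut_eq_finrank, h5]
  have hn := norm5 F L h5 σ hσ c
  rw [hc, map_one] at hn
  have hc0 : (c : L) ≠ 0 := c.ne_zero
  have hinv : ∀ a : L, a ≠ 0 → σ a ≠ 0 := fun a ha => by simpa using ha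
  let e := Equiv.ofBijective _ (pow_bij5 hcard σ hσ)
  let C : Lˣ →* Lˣ := Units.map (σ : L →* L)
  let f : Gal(L/F) → Lˣ := fun g => (![1, c, c * C c, c * C c * C (C c), c * C c * C (C c) * C (C (C c))] : Fin 5 → Lˣ) (e.symm g)
  have hf : ∀ i : Fin 5, f (σ ^ (i : ℕ)) = (![1, c, c * C c, c * C c * C (C c), c * C c * C (C c) * C (C (C c))] : Fin 5 → Lˣ) i := by
    intro i
    have : e.symm (σ ^ (i : ℕ)) = i := e.symm_apply_apply i
    simp only [f, this]
  obtain ⟨z, hz⟩ : ∃ z, groupCohomology.Hilbert90.aux f z ≠ 0 :=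
    not_forall.1 (fun H => groupCohomology.Hilbert90.aux_ne_zero f <| funext <| fun x => H x)
  have h1 : groupCohomology.Hilbert90.aux f z = ∑ h, f h * h z := by
    simp [groupCohomology.Hilbert90.aux, Finsupp.linearCombination, Finsupp.sum_fintype]
  rw [h1, ← Function.Bijective.sum_comp (pow_bij5 hcard σ hσ)] at hz
  simp only [hf] at hz
  rw [Fin.sum_univ_five] at hz
  set β := z + c * σ z + c * σ c * σ (σ z) + c * σ c * σ (σ c) * σ (σ (σ z)) + c * σ c * σ (σ c) * σ (σ (σ c)) * σ (σ (σ (σ z))) with hβ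
  have hβ0 : β ≠ 0 := by
    convert hz using 1
    have hC : ∀ u : Lˣ, ((C u : Lˣ) : L) = σ u := fun u => rfl
    simp [hβ, hC, pow_succ]
  have hrel : c * σ β = β := by
    rw [hβ]
    simp only [map_add, map_mul]
    rw [sigma5 F L h5]
    linear_combination z * (-hn)
  refine ⟨Units.mk0 β⁻¹ (inv_ne_zero hβ0), ?_⟩
  rw [Units.val_mk0, map_inv₀]
  have := hinv β hβ0
  field_simp
  exact hrel

/-- `σ - 1` on units -/
noncomputable def sU (σ : Gal(L/F)) : Lˣ →* Lˣ := Units.map (σ : L →* L) / MonoidHom.id _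

/-- norm on units -/
noncomputable def nU : Lˣ →* Lˣ := (Units.map (algebraMap F L : F →* L)).comp (Units.map (Algebra.norm F))

/-- `σ - 1` on ideals -/
noncomputable def sI (σ : Gal(L/F)) : (FractionalIdeal (𝓞 L)⁰ L)ˣ →* (FractionalIdeal (𝓞 L)⁰ L)ˣ :=
  frAct (σ : L ≃+* L) / MonoidHom.id _

lemma sU_coe (σ : Gal(L/F)) (u : Lˣ) : ((sU F L σ u : Lˣ) : L) = σ u / u := by
  simp [sU, MonoidHom.div_apply, Units.val_div_eq_div_val]

lemma nU_coe (u : Lˣ) : ((nU F L u : Lˣ) : L) = algebraMap F L (Algebra.norm F (u : L)) := rfl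

lemma mem_ker_sU (σ : Gal(L/F)) (u : Lˣ) : u ∈ (sU F L σ).ker ↔ σ u = u := by
  rw [MonoidHom.mem_ker, Units.ext_iff, sU_coe, Units.val_one, div_eq_one_iff_eq u.ne_zero]

lemma nU_eq (h5 : Module.finrank F L = 5) (σ : Gal(L/F)) (hσ : σ ≠ 1) (u : Lˣ) :
    nU F L u = u * Units.map (σ : L →* L) u * Units.map (σ : L →* L) (Units.map (σ : L →* L) u) *
      Units.map (σ : L →* L) (Units.map (σ : L →* L) (Units.map (σ : L →* L) u)) *
      Units.map (σ : L →* L) (Units.map (σ : L →* L) (Units.map (σ : L →* L) (Units.map (σ : L →* L) u))) := by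
  ext1
  rw [nU_coe, norm5 F L h5 σ hσ]; rfl

lemma ambig_FL (h5 : Module.finrank F L = 5) (σ : Gal(L/F)) (hσ : σ ≠ 1) (k q a : ℕ)
    (hk : ((sU F L σ).ker.map (toPrincipalIdeal (𝓞 L) L)).relIndex (sI F L σ).ker ≤ k)
    (hq : ((((toPrincipalIdeal (𝓞 L) L).ker ⊓ (sU F L σ).ker).map (powMonoidHom 5))).relIndex
       ((toPrincipalIdeal (𝓞 L) L).ker ⊓ (sU F L σ).ker ⊓ (nU F L).range) ≤ q)
    (hq0 : ((((toPrincipalIdeal (𝓞 L) L).ker ⊓ (sU F L σ).ker).map (powMonoidHom 5))).relIndex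
       ((toPrincipalIdeal (𝓞 L) L).ker ⊓ (sU F L σ).ker ⊓ (nU F L).range) ≠ 0)
    (ha : a ≤ (((toPrincipalIdeal (𝓞 L) L).ker ⊓ (nU F L).ker).map (sU F L σ)).relIndex 
       ((toPrincipalIdeal (𝓞 L) L).ker ⊓ (nU F L).ker)) :
    (toPrincipalIdeal (𝓞 L) L).range.relIndex
       ((toPrincipalIdeal (𝓞 L) L).range.comap (frAct (σ : L ≃+* L) / MonoidHom.id _)) * a ≤ q * k := by
  have hdv' : ∀ u : Lˣ, toPrincipalIdeal (𝓞 L) L (Units.map (σ : L →* L) u) = frAct (σ : L ≃+* L) (toPrincipalIdeal (𝓞 L) L u) :=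
    fun u => (frAct_principal (σ : L ≃+* L) u).symm
  refine aux_ambig (sU F L σ) (nU F L) (sI F L σ) (toPrincipalIdeal (𝓞 L) L) ?_ ?_ ?_ ?_ ?_ k q a hk hq hq0 ha
  · intro u
    rw [sU, sI, MonoidHom.div_apply, MonoidHom.div_apply, map_div, hdv']; rfl
  · ext u
    rw [MonoidHom.mem_ker, MonoidHom.mem_range]
    constructor
    · intro h
      have h1 : Algebra.norm F (u : L) = 1 := by
        apply (algebraMap F L).injective
        rw [← nU_coe, h, map_one]; rfl
      obtain ⟨y, hy⟩ := hilbert90_5 F L h5 σ hσ u h1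
      refine ⟨y, ?_⟩
      ext1
      rw [sU_coe, hy]
    · rintro ⟨y, rfl⟩
      rw [sU, MonoidHom.div_apply, map_div, div_eq_one]
      ext1
      rw [nU_coe, nU_coe]
      congr 1
      exact Algebra.norm_eq_of_algEquiv σ (y : L)
  · intro u
    rw [← MonoidHom.mem_ker, mem_ker_sU, nU_coe]
    exact σ.commutes _
  · intro u hu
    rw [mem_ker_sU] at hu
    ext1
    rw [nU_coe, norm5 F L h5 σ hσ, hu, hu, hu, hu, Units.val_pow_eq_pow_val]
    ring
  · intro c J hJ
    rw [nU_eq F L h5 σ hσ]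
    simp only [map_mul, hdv', hJ]
    rw [sI, MonoidHom.div_apply, MonoidHom.id_apply]
    simp only [map_div]
    have h55 : frAct (σ : L ≃+* L) (frAct (σ : L ≃+* L) (frAct (σ : L ≃+* L) (frAct (σ : L ≃+* L) (frAct (σ : L ≃+* L) J)))) = J := by
      simp only [frAct_trans]
      ext1
      rw [frAct_coe]
      ext y
      rw [mem_frEquiv]
      have : ∀ g : L ≃+* L, (∀ x, g x = x) → (g.symm y = y) := by
        intro g hg
        rw [RingEquiv.symm_apply_eq, hg]
      rw [this]
      intro x
      exact sigma5 F L h5 σ x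
    rw [h55]
    generalize frAct (σ : L ≃+* L) (frAct (σ : L ≃+* L) (frAct (σ : L ≃+* L) (frAct (σ : L ≃+* L) J))) = a4
    generalize frAct (σ : L ≃+* L) (frAct (σ : L ≃+* L) (frAct (σ : L ≃+* L) J)) = a3
    generalize frAct (σ : L ≃+* L) (frAct (σ : L ≃+* L) J) = a2
    generalize frAct (σ : L ≃+* L) J = a1
    rw [div_mul_div_comm, div_mul_div_comm, div_mul_div_comm, div_mul_div_comm, div_eq_one]
    simp only [mul_comm, mul_left_comm]
end
end

section
lemma index5_add (G : Type*) [AddCommGroup G] [Module.Finite ℤ G] :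
    (nsmulAddMonoidHom 5 : G →+ G).range.index =
      5 ^ (Module.finrank ℤ G) * Nat.card (nsmulAddMonoidHom 5 : G →+ G).ker := by
  set T := Submodule.torsion ℤ G with hT
  have hTmem : ∀ g : G, g ∈ T ↔ ∃ n : ℤ, n ≠ 0 ∧ n • g = 0 := by
    intro g
    rw [hT, Submodule.mem_torsion_iff]
    constructor
    · rintro ⟨a, ha⟩
      exact ⟨a, nonZeroDivisors.coe_ne_zero a, ha⟩
    · rintro ⟨n, hn, h⟩
      exact ⟨⟨n, mem_nonZeroDivisors_of_ne_zero hn⟩, h⟩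
  have hTfin : Finite T := Module.finite_of_fg_torsion T (Submodule.torsion_isTorsion)
  set P := (nsmulAddMonoidHom 5 : G →+ G).range with hP
  set M := P ⊔ T.toAddSubgroup with hM
  have h1 : P.relIndex M * M.index = P.index := AddSubgroup.relIndex_mul_index le_sup_left
  have h2 : P.relIndex M = Nat.card (nsmulAddMonoidHom 5 : G →+ G).ker := by
    rw [hM, AddSubgroup.relIndex_sup_left, AddSubgroup.relIndex]
    have e : P.addSubgroupOf T.toAddSubgroup = (nsmulAddMonoidHom 5 : T.toAddSubgroup →+ T.toAddSubgroup).range := by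
      ext ⟨t, ht⟩
      rw [AddSubgroup.mem_addSubgroupOf]
      constructor
      · rintro ⟨g, hg⟩
        have hg' : 5 • g = t := hg
        obtain ⟨n, hn, h⟩ := (hTmem t).1 ht
        refine ⟨⟨g, (hTmem g).2 ⟨n * 5, by positivity, ?_⟩⟩, Subtype.ext hg⟩
        rw [mul_smul, ← h, ← hg', ← Nat.cast_smul_eq_nsmul ℤ]; rfl
      · rintro ⟨g, hg⟩
        exact ⟨g, congrArg Subtype.val hg⟩
    rw [e]
    have hTfin' : Finite T.toAddSubgroup := hTfin
    have e1 := (nsmulAddMonoidHom 5 : T.toAddSubgroup →+ T.toAddSubgroup).range.card_mul_index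
    have e2 := (nsmulAddMonoidHom 5 : T.toAddSubgroup →+ T.toAddSubgroup).ker.card_mul_index
    rw [AddSubgroup.index_ker] at e2
    have e3 : 0 < Nat.card (nsmulAddMonoidHom 5 : T.toAddSubgroup →+ T.toAddSubgroup).range := Nat.card_pos
    have e4 : (nsmulAddMonoidHom 5 : T.toAddSubgroup →+ T.toAddSubgroup).range.index =
       Nat.card (nsmulAddMonoidHom 5 : T.toAddSubgroup →+ T.toAddSubgroup).ker := by
      apply Nat.eq_of_mul_eq_mul_left e3
      rw [e1, ← e2, mul_comm]
    rw [e4]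
    refine Nat.card_congr ⟨fun x => ⟨x.1.1, congrArg Subtype.val x.2⟩, fun x => ⟨⟨x.1, (hTmem _).2 ⟨5, by norm_num, ?_⟩⟩, Subtype.ext x.2⟩, 
      fun x => rfl, fun x => rfl⟩
    have := x.2
    have h5 : 5 • x.1 = 0 := this
    rw [← h5, ← Nat.cast_smul_eq_nsmul ℤ]; rfl
  have h3 : M.index = 5 ^ Module.finrank ℤ G := by
    have hr : Module.finrank ℤ (G ⧸ T) = Module.finrank ℤ G := finrank_quotient_eq_of_le_torsion le_rfl
    set b := Module.finBasis ℤ (G ⧸ T) with hb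
    rw [hr] at b
    let φ : G →+ (Fin (Module.finrank ℤ G) → ZMod 5) := 
      ((Int.castAddHom (ZMod 5)).compLeft _).comp (b.equivFun.toLinearMap.comp T.mkQ).toAddMonoidHom
    have hφ : ∀ g i, φ g i = ((b.equivFun (T.mkQ g) i : ℤ) : ZMod 5) := fun g i => rfl
    have hsurj : Function.Surjective φ := by
      intro y
      choose z hz using fun i => ZMod.intCast_surjective (y i)
      obtain ⟨g, hg⟩ := T.mkQ_surjective (b.equivFun.symm z)
      refine ⟨g, ?_⟩
      ext i
      rw [hφ, hg, LinearEquiv.apply_symm_apply, hz]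
    have hker : M = φ.ker := by
      ext g
      rw [hM, AddMonoidHom.mem_ker, AddSubgroup.mem_sup]
      constructor
      · rintro ⟨_, ⟨y, rfl⟩, z, hz, rfl⟩
        rw [map_add]
        have ez : φ z = 0 := by
          ext i
          have : T.mkQ z = 0 := by simpa using hz
          rw [hφ, this]; simp
        have ey : φ (5 • y) = 0 := by
          rw [map_nsmul]
          ext i
          simp only [Pi.smul_apply, Pi.zero_apply]
          rw [nsmul_eq_mul, show ((5 : ℕ) : ZMod 5) = 0 from rfl, zero_mul]
        rw [ez, add_zero]; exact ey
      · intro h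
        have h5 : ∀ i, ∃ c : ℤ, b.equivFun (T.mkQ g) i = 5 * c := by
          intro i
          have := congrFun h i
          rw [hφ, Pi.zero_apply, ZMod.intCast_zmod_eq_zero_iff_dvd] at this
          exact this
        choose c hc using h5
        obtain ⟨y, hy⟩ := T.mkQ_surjective (b.equivFun.symm c)
        refine ⟨5 • y, ⟨y, rfl⟩, g - 5 • y, ?_, by abel⟩
        rw [Submodule.mem_toAddSubgroup, ← Submodule.Quotient.mk_eq_zero, ← Submodule.mkQ_apply]
        apply b.equivFun.injective
        rw [map_sub, map_nsmul, hy, map_sub, map_nsmul, LinearEquiv.apply_symm_apply, map_zero]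
        ext i
        rw [Pi.sub_apply, hc i]
        simp
    rw [hker, AddSubgroup.index_ker, AddMonoidHom.range_eq_top.2 hsurj]
    simp
  rw [← h1, h2, h3, mul_comm]

lemma index5 (G : Type*) [CommGroup G] [Module.Finite ℤ (Additive G)] :
    (powMonoidHom 5 : G →* G).range.index =
      5 ^ (Module.finrank ℤ (Additive G)) * Nat.card (powMonoidHom 5 : G →* G).ker :=
  index5_add (Additive G)
end

section
open NumberField Pointwise nonZeroDivisors

lemma rank_L_ge (L : Type*) [Field L] [NumberField L] (h : Module.finrank ℚ L = 20) : 9 ≤ Units.rank L := by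
  have h1 := InfinitePlace.card_add_two_mul_card_eq_rank L
  have h2 := InfinitePlace.card_eq_nrRealPlaces_add_nrComplexPlaces L
  rw [Units.rank]
  omega

section
variable (F L : Type*) [Field F] [NumberField F] [Field L] [NumberField L] [Algebra F L] [IsGalois F L]

/-- units of the ring of integers inside `Lˣ` -/
noncomputable def iotaU : (𝓞 L)ˣ →* Lˣ := Units.map (algebraMap (𝓞 L) L : 𝓞 L →* L)

lemma iotaU_inj : Function.Injective (iotaU L) := Units.map_injective (RingOfIntegers.coe_injective)

lemma iotaU_coe (u : (𝓞 L)ˣ) : (iotaU L u : L) = ((u : 𝓞 L) : L) := rfl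

lemma ker_dv : (toPrincipalIdeal (𝓞 L) L).ker = (iotaU L).range := by
  ext u
  rw [MonoidHom.mem_ker, toPrincipalIdeal_eq_iff, Units.val_one, MonoidHom.mem_range]
  constructor
  · intro h
    have h1 : (u : L) ∈ (1 : FractionalIdeal (𝓞 L)⁰ L) := by
      rw [← h]; exact FractionalIdeal.mem_spanSingleton_self _ _
    have h2 : ((u⁻¹ : Lˣ) : L) ∈ (1 : FractionalIdeal (𝓞 L)⁰ L) := by
      have : FractionalIdeal.spanSingleton (𝓞 L)⁰ ((u⁻¹ : Lˣ) : L) = 1 := by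
        rw [Units.val_inv_eq_inv_val, ← FractionalIdeal.spanSingleton_inv, h, inv_one]
      rw [← this]; exact FractionalIdeal.mem_spanSingleton_self _ _
    rw [FractionalIdeal.mem_one_iff] at h1 h2
    obtain ⟨a, ha⟩ := h1
    obtain ⟨b, hb⟩ := h2
    have hab : a * b = 1 := by
      apply RingOfIntegers.coe_injective
      change algebraMap (𝓞 L) L (a * b) = algebraMap (𝓞 L) L 1
      rw [map_mul, ha, hb, map_one, Units.mul_inv]
    exact ⟨⟨a, b, hab, by rw [mul_comm, hab]⟩, Units.ext ha⟩
  · rintro ⟨e, rfl⟩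
    rw [iotaU_coe, ← FractionalIdeal.coeIdeal_span_singleton, Ideal.span_singleton_eq_top.2 e.isUnit, FractionalIdeal.coeIdeal_top]

lemma A_eq : (toPrincipalIdeal (𝓞 L) L).ker ⊓ (nU F L).ker = (Units.map (RingOfIntegers.norm F : 𝓞 L →* 𝓞 F)).ker.map (iotaU L) := by
  rw [ker_dv]
  ext u
  have key : ∀ e : (𝓞 L)ˣ, iotaU L e ∈ (nU F L).ker ↔ e ∈ (Units.map (RingOfIntegers.norm F : 𝓞 L →* 𝓞 F)).ker := by
    intro e
    rw [MonoidHom.mem_ker, MonoidHom.mem_ker, Units.ext_iff, Units.ext_iff, nU_coe, Units.val_one, Units.val_one, Units.coe_map]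
    rw [map_eq_one_iff _ (algebraMap F L).injective, ← RingOfIntegers.coe_injective.eq_iff]
    rfl
  constructor
  · rintro ⟨⟨e, rfl⟩, h2⟩
    exact ⟨e, (key e).1 h2, rfl⟩
  · rintro ⟨e, he, rfl⟩
    exact ⟨⟨e, rfl⟩, (key e).2 he⟩

lemma A_index (hL : 9 ≤ Units.rank L) (hF : Units.rank F ≤ 1) (A : Subgroup Lˣ)
    (hA : A = (toPrincipalIdeal (𝓞 L) L).ker ⊓ (nU F L).ker) (ζ : Lˣ) (hζ : ζ ∈ A) (hζ5 : orderOf ζ = 5) :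
    (powMonoidHom 5 : A →* A).range.index ≠ 0 ∧ 5 ^ 9 ≤ (powMonoidHom 5 : A →* A).range.index := by
  rw [A_eq] at hA
  set ν := (Units.map (RingOfIntegers.norm F : 𝓞 L →* 𝓞 F)) with hν
  let e1 : ν.ker ≃* ν.ker.map (iotaU L) := ν.ker.equivMapOfInjective (iotaU L) (iotaU_inj L)
  rw [← hA] at e1
  let f : Additive (𝓞 L)ˣ →ₗ[ℤ] Additive (𝓞 F)ˣ := ν.toAdditive.toIntLinearMap
  let e2 : f.ker ≃+ Additive ν.ker :=
    { toFun := fun x => Additive.ofMul ⟨x.1.toMul, x.2⟩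
      invFun := fun x => ⟨Additive.ofMul x.toMul.1, x.toMul.2⟩
      left_inv := fun x => rfl
      right_inv := fun x => rfl
      map_add' := fun x y => rfl }
  let e3 : f.ker ≃ₗ[ℤ] Additive A := (e2.trans e1.toAdditive).toIntLinearEquiv
  have hfin : Module.Finite ℤ (Additive A) := Module.Finite.equiv e3
  have hrank : 8 ≤ Module.finrank ℤ (Additive A) := by
    rw [← e3.finrank_eq]
    have h1 := Submodule.finrank_quotient_add_finrank f.ker
    rw [Units.finrank_eq, f.quotKerEquivRange.finrank_eq] at h1
    have h2 : Module.finrank ℤ f.range ≤ Module.finrank ℤ (Additive (𝓞 F)ˣ) := Submodule.finrank_le _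
    rw [Units.finrank_eq] at h2
    omega
  have hidx := index5 A
  have hker : 5 ∣ Nat.card (powMonoidHom 5 : A →* A).ker := by
    let z : (powMonoidHom 5 : A →* A).ker := ⟨⟨ζ, hζ⟩, by
      rw [MonoidHom.mem_ker, powMonoidHom_apply]
      ext1
      change ζ ^ 5 = 1
      rw [← hζ5, pow_orderOf_eq_one]⟩
    have hz : orderOf z = 5 := by
      rw [← Subgroup.orderOf_coe, ← Subgroup.orderOf_coe]; exact hζ5
    have hd := orderOf_dvd_natCard z
    rw [hz] at hd
    exact hd
  have hkfin : Finite (powMonoidHom 5 : A →* A).ker := by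
    have : Finite (rootsOfUnity 5 L) := inferInstance
    refine Finite.of_injective (fun x : (powMonoidHom 5 : A →* A).ker => (⟨x.1.1, ?_⟩ : rootsOfUnity 5 L)) ?_
    · have := x.2
      rw [MonoidHom.mem_ker, powMonoidHom_apply] at this
      rw [mem_rootsOfUnity]
      exact congrArg Subtype.val this
    · intro x y h
      apply Subtype.ext
      apply Subtype.ext
      exact congrArg (fun w : rootsOfUnity 5 L => (w : Lˣ)) h
  have hpos : 0 < Nat.card (powMonoidHom 5 : A →* A).ker := Nat.card_pos
  rw [hidx]
  refine ⟨by positivity, ?_⟩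
  calc 5 ^ 9 = 5 ^ 8 * 5 := by norm_num
    _ ≤ _ := Nat.mul_le_mul (Nat.pow_le_pow_right (by norm_num) hrank) (Nat.le_of_dvd hpos hker)

lemma ha_bound (h5 : Module.finrank F L = 5) (σ : Gal(L/F)) (hσ : σ ≠ 1)
    (hL : 9 ≤ Units.rank L) (hF : Units.rank F ≤ 1)
    (ζ : F) (hζ : IsPrimitiveRoot ζ 5) :
    26 ≤ (((toPrincipalIdeal (𝓞 L) L).ker ⊓ (nU F L).ker).map (sU F L σ)).relIndex 
       ((toPrincipalIdeal (𝓞 L) L).ker ⊓ (nU F L).ker) := by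
  set A := (toPrincipalIdeal (𝓞 L) L).ker ⊓ (nU F L).ker with hA
  have hσA : ∀ u ∈ A, Units.map (σ : L →* L) u ∈ A := by
    rintro u ⟨h1, h2⟩
    refine ⟨?_, ?_⟩
    · replace h1 : toPrincipalIdeal (𝓞 L) L u = 1 := h1
      change toPrincipalIdeal (𝓞 L) L _ = 1
      have := frAct_principal (σ : L ≃+* L) u
      rw [h1, map_one] at this
      exact this.symm
    · replace h2 : nU F L u = 1 := h2
      change nU F L _ = 1
      rw [← h2]
      ext1
      rw [nU_coe, nU_coe]
      congr 1
      exact Algebra.norm_eq_of_algEquiv σ (u : L)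
  let τ : A →* A := ((Units.map (σ : L →* L)).comp A.subtype).codRestrict A (fun u => hσA u u.2)
  let sA : A →* A := τ / MonoidHom.id A
  have hsA : ∀ u : A, ((sA u : A) : Lˣ) = sU F L σ u := fun u => rfl
  have hrel : (A.map (sU F L σ)).relIndex A = sA.range.index := by
    rw [Subgroup.relIndex]
    congr 1
    ext u
    rw [Subgroup.mem_subgroupOf]
    constructor
    · rintro ⟨v, hv, h⟩
      exact ⟨⟨v, hv⟩, Subtype.ext h⟩
    · rintro ⟨v, h⟩
      exact ⟨v, v.2, congrArg Subtype.val h⟩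
  rw [hrel]
  have hnorm : ∀ a : A, a * τ a * τ (τ a) * τ (τ (τ a)) * τ (τ (τ (τ a))) = 1 := by
    intro a
    apply Subtype.ext
    have h1 := nU_eq F L h5 σ hσ a
    rw [MonoidHom.mem_ker.1 a.2.2] at h1
    exact h1.symm
  have hζ' : IsPrimitiveRoot (algebraMap F L ζ) 5 := hζ.map_of_injective (algebraMap F L).injective
  let z : Lˣ := (hζ'.isUnit (by norm_num)).unit
  have hzc : (z : L) = algebraMap F L ζ := rfl
  have hz5 : orderOf z = 5 := by
    rw [← orderOf_units, hzc]; exact hζ'.eq_orderOf.symm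
  have hzA : z ∈ A := by
    refine ⟨?_, ?_⟩
    · rw [ker_dv]
      have hi : IsPrimitiveRoot (hζ'.toInteger) 5 := hζ'.toInteger_isPrimitiveRoot
      exact ⟨(hi.isUnit (by norm_num)).unit, Units.ext rfl⟩
    · change nU F L _ = 1
      ext1
      rw [nU_coe, hzc, Algebra.norm_algebraMap, h5, hζ.pow_eq_one, map_one]; rfl
  obtain ⟨h0, h9⟩ := A_index F L hL hF A hA z hzA hz5
  have hs : ∀ a : A, sA a = τ a / a := fun a => rfl
  refine aux_unit_index sA ?_ ?_ h0 h9
  · intro a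
    have hn := hnorm a
    refine ⟨(τ (τ (τ a)))⁻¹ * τ (τ a) * (τ a)⁻¹, ?_⟩
    rw [← mul_one ((_ : A) ^ 5), ← hn]
    simp only [hs, map_div]
    generalize τ (τ (τ (τ a))) = a4
    generalize τ (τ (τ a)) = a3
    generalize τ (τ a) = a2
    generalize τ a = a1
    apply Additive.ofMul.injective
    simp only [ofMul_mul, ofMul_div, ofMul_inv, ofMul_pow]
    abel
  · intro a
    have hn := hnorm a
    refine ⟨(τ (τ (τ a)) * τ (τ a) ^ 2 * τ a ^ 3 * a ^ 4)⁻¹, ?_⟩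
    rw [← div_one (a ^ 5), ← hn]
    simp only [hs, map_mul, map_inv, map_pow]
    generalize τ (τ (τ (τ a))) = a4
    generalize τ (τ (τ a)) = a3
    generalize τ (τ a) = a2
    generalize τ a = a1
    apply Additive.ofMul.injective
    simp only [ofMul_mul, ofMul_div, ofMul_inv, ofMul_pow]
    abel
end
end

section
open NumberField Pointwise nonZeroDivisors

section
variable (F L : Type*) [Field F] [NumberField F] [Field L] [NumberField L] [Algebra F L] [IsGalois F L]

lemma fixed_descends (h5 : Module.finrank F L = 5) (σ : Gal(L/F)) (hσ : σ ≠ 1) (y : L) (hy : σ y = y) :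
    ∃ c : F, algebraMap F L c = y := by
  have hc : Nat.card Gal(L/F) = 5 := by rw [IsGalois.card_aut_eq_finrank, h5]
  have : y ∈ Set.range (algebraMap F L) := by
    rw [IsGalois.mem_range_algebraMap_iff_fixed]
    intro f
    have hf := zpowers5 hc σ hσ f
    have h1 : σ ∈ MulAction.stabilizer Gal(L/F) y := hy
    exact (Subgroup.zpowers_le.2 h1) hf
  exact this

/-- the units of `F` inside `Lˣ` -/
noncomputable def iotaF : (𝓞 F)ˣ →* Lˣ :=
  (iotaU L).comp (Units.map (algebraMap (𝓞 F) (𝓞 L) : 𝓞 F →* 𝓞 L))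

lemma iotaF_inj : Function.Injective (iotaF F L) :=
  (iotaU_inj L).comp (Units.map_injective (FaithfulSMul.algebraMap_injective (𝓞 F) (𝓞 L)))

lemma iotaF_coe (u : (𝓞 F)ˣ) : (iotaF F L u : L) = algebraMap F L ((u : 𝓞 F) : F) := rfl

lemma E_eq (h5 : Module.finrank F L = 5) (σ : Gal(L/F)) (hσ : σ ≠ 1) :
    (toPrincipalIdeal (𝓞 L) L).ker ⊓ (sU F L σ).ker = (iotaF F L).range := by
  ext u
  rw [Subgroup.mem_inf, mem_ker_sU, ker_dv]
  constructor
  · rintro ⟨⟨e, rfl⟩, h⟩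
    obtain ⟨c, hc⟩ := fixed_descends F L h5 σ hσ _ h
    have hσi : σ ((iotaU L e⁻¹ : Lˣ) : L) = ((iotaU L e⁻¹ : Lˣ) : L) := by
      rw [map_inv, Units.val_inv_eq_inv_val, map_inv₀, h]
    obtain ⟨d, hd⟩ := fixed_descends F L h5 σ hσ _ hσi
    have hci : IsIntegral ℤ c := by
      have : IsIntegral ℤ (algebraMap F L c) := by rw [hc]; exact RingOfIntegers.isIntegral_coe _
      exact (isIntegral_algebraMap_iff (algebraMap F L).injective).1 this
    have hdi : IsIntegral ℤ d := by
      have : IsIntegral ℤ (algebraMap F L d) := by rw [hd]; exact RingOfIntegers.isIntegral_coe _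
      exact (isIntegral_algebraMap_iff (algebraMap F L).injective).1 this
    have hcd : c * d = 1 := by
      apply (algebraMap F L).injective
      rw [map_mul, hc, hd, ← Units.val_mul, ← map_mul, mul_inv_cancel, map_one, map_one]; rfl
    have hcd' : (⟨c, hci⟩ : 𝓞 F) * ⟨d, hdi⟩ = 1 := RingOfIntegers.ext hcd
    exact ⟨⟨⟨c, hci⟩, ⟨d, hdi⟩, hcd', (mul_comm _ _).trans hcd'⟩, Units.ext hc⟩
  · rintro ⟨e, rfl⟩
    refine ⟨⟨_, rfl⟩, ?_⟩
    rw [iotaF_coe, AlgEquiv.commutes]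

lemma E_index (h5 : Module.finrank F L = 5) (σ : Gal(L/F)) (hσ : σ ≠ 1) (hF : Units.rank F ≤ 1)
    (ζ : F) (hζ : IsPrimitiveRoot ζ 5) :
    (((toPrincipalIdeal (𝓞 L) L).ker ⊓ (sU F L σ).ker).map (powMonoidHom 5)).relIndex
       ((toPrincipalIdeal (𝓞 L) L).ker ⊓ (sU F L σ).ker) ∣ 25 := by
  rw [E_eq F L h5 σ hσ]
  have h1 : ((iotaF F L).range.map (powMonoidHom 5)) = ((powMonoidHom 5 : (𝓞 F)ˣ →* (𝓞 F)ˣ).range).map (iotaF F L) := by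
    rw [← MonoidHom.range_comp, ← MonoidHom.range_comp]
    congr 1
    ext u
    simp
  have h2 : (iotaF F L).range = (⊤ : Subgroup (𝓞 F)ˣ).map (iotaF F L) := MonoidHom.range_eq_map _
  rw [h1, h2, Subgroup.relIndex_map_map_of_injective _ _ (iotaF_inj F L), Subgroup.relIndex_top_right, index5, Units.finrank_eq]
  have hk : Nat.card (powMonoidHom 5 : (𝓞 F)ˣ →* (𝓞 F)ˣ).ker ∣ 5 := by
    have hc : Nat.card (rootsOfUnity 5 (𝓞 F)) = 5 :=
      (hζ.toInteger_isPrimitiveRoot).card_rootsOfUnity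
    have : (powMonoidHom 5 : (𝓞 F)ˣ →* (𝓞 F)ˣ).ker = rootsOfUnity 5 (𝓞 F) := by
      ext u; rw [MonoidHom.mem_ker, mem_rootsOfUnity]; rfl
    rw [this, hc]
  calc _ ∣ 5 ^ 1 * 5 := Nat.mul_dvd_mul (pow_dvd_pow 5 hF) hk
    _ = 25 := by norm_num

lemma pow5_le_nU (h5 : Module.finrank F L = 5) (σ : Gal(L/F)) (hσ : σ ≠ 1) :
    ((toPrincipalIdeal (𝓞 L) L).ker ⊓ (sU F L σ).ker).map (powMonoidHom 5) ≤ 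
       (toPrincipalIdeal (𝓞 L) L).ker ⊓ (sU F L σ).ker ⊓ (nU F L).range := by
  rintro _ ⟨u, hu, rfl⟩
  refine ⟨pow_mem hu 5, u, ?_⟩
  rw [E_eq F L h5 σ hσ] at hu
  obtain ⟨e, rfl⟩ := hu
  ext1
  rw [nU_coe, iotaF_coe, Algebra.norm_algebraMap, h5, map_pow]; rfl

lemma q_bound (h5 : Module.finrank F L = 5) (σ : Gal(L/F)) (hσ : σ ≠ 1) (hF : Units.rank F ≤ 1)
    (ζ : F) (hζ : IsPrimitiveRoot ζ 5) :
    (((toPrincipalIdeal (𝓞 L) L).ker ⊓ (sU F L σ).ker).map (powMonoidHom 5)).relIndex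
       ((toPrincipalIdeal (𝓞 L) L).ker ⊓ (sU F L σ).ker ⊓ (nU F L).range) ∣ 25 := by
  refine dvd_trans ?_ (E_index F L h5 σ hσ hF ζ hζ)
  rw [← Subgroup.relIndex_mul_relIndex _ _ _ (pow5_le_nU F L h5 σ hσ) inf_le_left]
  exact dvd_mul_right _ _

lemma q_bound' (h5 : Module.finrank F L = 5) (σ : Gal(L/F)) (hσ : σ ≠ 1) (hF : Units.rank F ≤ 1)
    (ζ : F) (hζ : IsPrimitiveRoot ζ 5) (hn : ¬ ∃ y : L, Algebra.norm F y = ζ) :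
    (((toPrincipalIdeal (𝓞 L) L).ker ⊓ (sU F L σ).ker).map (powMonoidHom 5)).relIndex
       ((toPrincipalIdeal (𝓞 L) L).ker ⊓ (sU F L σ).ker ⊓ (nU F L).range) ≤ 5 := by
  have h1 := E_index F L h5 σ hσ hF ζ hζ
  have h2 := Subgroup.relIndex_mul_relIndex _ _ _ (pow5_le_nU F L h5 σ hσ) inf_le_left
  rw [← h2] at h1
  have h3 : ((toPrincipalIdeal (𝓞 L) L).ker ⊓ (sU F L σ).ker ⊓ (nU F L).range).relIndex ((toPrincipalIdeal (𝓞 L) L).ker ⊓ (sU F L σ).ker) ≠ 1 := by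
    rw [Ne, Subgroup.relIndex_eq_one]
    intro hle
    have hi : IsPrimitiveRoot (hζ.toInteger) 5 := hζ.toInteger_isPrimitiveRoot
    have hz : iotaF F L (hi.isUnit (by norm_num)).unit ∈ (toPrincipalIdeal (𝓞 L) L).ker ⊓ (sU F L σ).ker := by
      rw [E_eq F L h5 σ hσ]; exact ⟨_, rfl⟩
    obtain ⟨y, hy⟩ := (hle hz).2
    apply hn
    refine ⟨y, (algebraMap F L).injective ?_⟩
    have := congrArg (fun u : Lˣ => (u : L)) hy
    simp only [nU_coe, iotaF_coe] at this
    exact this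
  generalize (((toPrincipalIdeal (𝓞 L) L).ker ⊓ (sU F L σ).ker).map (powMonoidHom 5)).relIndex
       ((toPrincipalIdeal (𝓞 L) L).ker ⊓ (sU F L σ).ker ⊓ (nU F L).range) = x at *
  generalize ((toPrincipalIdeal (𝓞 L) L).ker ⊓ (sU F L σ).ker ⊓ (nU F L).range).relIndex ((toPrincipalIdeal (𝓞 L) L).ker ⊓ (sU F L σ).ker) = y at *
  have hx : x ∣ 25 := dvd_trans (dvd_mul_right _ _) h1
  have hx' : x ≤ 25 := Nat.le_of_dvd (by norm_num) hx
  have hy : y ∣ 25 := dvd_trans (dvd_mul_left _ _) h1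
  have hy' : y ≤ 25 := Nat.le_of_dvd (by norm_num) hy
  have hxy := Nat.le_of_dvd (by norm_num) h1
  have hy0 : y ≠ 0 := by rintro rfl; omega
  by_contra hlt
  have : 2 ≤ y := by omega
  have : x ≤ 12 := by nlinarith
  interval_cases x <;> omega
end

lemma rank_F_le (F : Type*) [Field F] [NumberField F] [IsCyclotomicExtension {5} ℚ F] : Units.rank F ≤ 1 := by
  have h0 : Module.finrank ℚ F = 4 := by
    rw [IsCyclotomicExtension.finrank (n := 5) F (Polynomial.cyclotomic.irreducible_rat (by norm_num))]
    decide
  have : IsTotallyComplex F := IsCyclotomicExtension.Rat.isTotallyComplex (n := 5) F (by norm_num)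
  have h1 := InfinitePlace.card_add_two_mul_card_eq_rank F
  have h2 := InfinitePlace.card_eq_nrRealPlaces_add_nrComplexPlaces F
  have h3 : InfinitePlace.nrRealPlaces F = 0 := IsTotallyComplex.nrRealPlaces_eq_zero F
  rw [Units.rank]
  omega
end

section
open NumberField Pointwise nonZeroDivisors

section
variable (F L : Type*) [Field F] [NumberField F] [Field L] [NumberField L] [Algebra F L] [IsGalois F L]
open IsDedekindDomain

/-- valuations mod 5 at the places in `S` -/
noncomputable def cntHom (S : Finset (HeightOneSpectrum (𝓞 L))) :
    (FractionalIdeal (𝓞 L)⁰ L)ˣ →* Multiplicative (S → ZMod 5) where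
  toFun I := Multiplicative.ofAdd fun v => (FractionalIdeal.count L v.1 (I : FractionalIdeal (𝓞 L)⁰ L) : ZMod 5)
  map_one' := by
    apply Multiplicative.toAdd.injective
    funext v
    simp [FractionalIdeal.count_one]
  map_mul' I J := by
    apply Multiplicative.toAdd.injective
    funext v
    simp [FractionalIdeal.count_mul L v.1 I.ne_zero J.ne_zero]

lemma count_eq_mult (v : HeightOneSpectrum (𝓞 L)) (I : Ideal (𝓞 L)) (hI : I ≠ ⊥) :
    FractionalIdeal.count L v (I : FractionalIdeal (𝓞 L)⁰ L) = multiplicity v.asIdeal I := by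
  classical
  rw [FractionalIdeal.count_coe L v hI, Ideal.count_associates_factors_eq hI v.isPrime v.ne_bot,
    HeightOneSpectrum.count_normalizedFactors_eq_multiplicity hI]

lemma ker_cnt_le [IsPrincipalIdealRing (𝓞 F)] (h5 : Module.finrank F L = 5) (σ : Gal(L/F)) (hσ : σ ≠ 1)
    (S : Finset (HeightOneSpectrum (𝓞 L)))
    (hS : ∀ p : HeightOneSpectrum (𝓞 F), ∃ P : HeightOneSpectrum (𝓞 L), P.asIdeal.LiesOver p.asIdeal ∧
      (P.asIdeal.inertia Gal(L/F) = ⊥ ∨ P ∈ S)) :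
    (cntHom L S).ker ⊓ (sI F L σ).ker ≤ (sU F L σ).ker.map (toPrincipalIdeal (𝓞 L) L) := by
  rintro J ⟨hJ1, hJ2⟩
  have hfix : frAct (σ : L ≃+* L) J = J := div_eq_one.1 (show frAct (σ : L ≃+* L) J / J = 1 from hJ2)
  have hcnt : ∀ v ∈ S, ((FractionalIdeal.count L v (J : FractionalIdeal (𝓞 L)⁰ L) : ℤ) : ZMod 5) = 0 := by
    intro v hv
    exact congrFun (congrArg Multiplicative.toAdd (show cntHom L S J = 1 from hJ1)) ⟨v, hv⟩
  obtain ⟨a, aI, ha, haI⟩ := FractionalIdeal.exists_eq_spanSingleton_mul (J : FractionalIdeal (𝓞 L)⁰ L)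
  obtain ⟨b, hb⟩ : ∃ b : 𝓞 L, ((Ideal.absNorm (Ideal.span {a}) : ℕ) : 𝓞 L) = b * a := by
    have := Ideal.absNorm_mem (Ideal.span {a})
    rw [Ideal.mem_span_singleton'] at this
    obtain ⟨b, hb⟩ := this
    exact ⟨b, hb.symm⟩
  set n := Ideal.absNorm (Ideal.span {a}) with hn
  have hn0 : n ≠ 0 := by
    rw [hn, Ne, Ideal.absNorm_eq_zero_iff, Ideal.span_singleton_eq_bot]; exact ha
  have hnL : ((n : ℕ) : L) ≠ 0 := by exact_mod_cast hn0
  let u : Lˣ := Units.mk0 ((n : L) ^ 5) (pow_ne_zero _ hnL)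
  let J' := toPrincipalIdeal (𝓞 L) L u * J
  let I : Ideal (𝓞 L) := Ideal.span {(n : 𝓞 L) ^ 4 * b} * aI
  have haL : (algebraMap (𝓞 L) L a) ≠ 0 := by
    rw [Ne, map_eq_zero_iff _ (FaithfulSMul.algebraMap_injective (𝓞 L) L)]; exact ha
  have hJ'I : (J' : FractionalIdeal (𝓞 L)⁰ L) = (I : FractionalIdeal (𝓞 L)⁰ L) := by
    have hbL : (n : L) = algebraMap (𝓞 L) L b * algebraMap (𝓞 L) L a := by
      rw [← map_mul, ← hb, map_natCast]
    rw [FractionalIdeal.coeIdeal_mul, FractionalIdeal.coeIdeal_span_singleton, Units.val_mul, coe_toPrincipalIdeal, haI, ← mul_assoc,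
      FractionalIdeal.spanSingleton_mul_spanSingleton]
    congr 2
    change (n : L) ^ 5 * _ = _
    rw [map_mul, map_pow, map_natCast]
    rw [pow_succ, mul_assoc]
    congr 1
    rw [hbL, mul_assoc, mul_inv_cancel₀ haL, mul_one]
  have hI0 : I ≠ ⊥ := by
    intro h
    rw [h, FractionalIdeal.coeIdeal_bot] at hJ'I
    exact J'.ne_zero hJ'I
  have hmem : I ∈ (Ideal (𝓞 L))⁰ := mem_nonZeroDivisors_iff_ne_zero.2 hI0
  have hmk : FractionalIdeal.mk0 L ⟨I, hmem⟩ = J' := Units.ext (by rw [hJ'I]; rfl)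
  have hσu : Units.map ((σ : L ≃+* L) : L →* L) u = u := by
    ext1
    change σ ((n : L) ^ 5) = (n : L) ^ 5
    rw [map_pow, map_natCast]
  have hσI : σ • I = I := by
    have h1 := frAct_smul F L ⟨I, hmem⟩ (σ : L ≃+* L) σ (fun x => rfl)
    rw [hmk, map_mul, hfix, frAct_principal, hσu] at h1
    change (J' : FractionalIdeal (𝓞 L)⁰ L) = _ at h1
    rw [hJ'I] at h1
    exact (FractionalIdeal.coeIdeal_injective h1).symm
  have hc : Nat.card Gal(L/F) = 5 := by rw [IsGalois.card_aut_eq_finrank, h5]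
  have hall : ∀ g : Gal(L/F), g • I = I := by
    intro g
    have h1 : σ ∈ MulAction.stabilizer Gal(L/F) I := hσI
    exact (Subgroup.zpowers_le.2 h1) (zpowers5 hc σ hσ g)
  obtain ⟨c, hcI⟩ := invariant_descends F L h5 I hI0 hall (by
    intro p
    obtain ⟨P, hP, h⟩ := hS p
    refine ⟨P.asIdeal, hP, P.isPrime, h.imp id ?_⟩
    intro hPS
    have h1 := count_eq_mult L P I hI0
    rw [← hJ'I, Units.val_mul, FractionalIdeal.count_mul L P (Units.ne_zero _) J.ne_zero] at h1
    have h2 : (toPrincipalIdeal (𝓞 L) L u : FractionalIdeal (𝓞 L)⁰ L) = (FractionalIdeal.spanSingleton (𝓞 L)⁰ (n : L)) ^ 5 := by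
      rw [coe_toPrincipalIdeal, FractionalIdeal.spanSingleton_pow]; rfl
    rw [h2, FractionalIdeal.count_pow] at h1
    have h3 := congrArg (fun z : ℤ => (z : ZMod 5)) h1
    simp only [Int.cast_add, Int.cast_mul, Int.cast_natCast, hcnt P hPS] at h3
    rw [ZMod.natCast_self, zero_mul, zero_add] at h3
    exact (ZMod.natCast_eq_zero_iff _ _).1 h3.symm)
  have hc0 : (algebraMap F L (c : F)) ≠ 0 := by
    intro h
    apply hI0
    rw [hcI, Ideal.span_singleton_eq_bot]
    exact RingOfIntegers.coe_injective (by rw [map_zero]; exact h)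
  refine ⟨Units.mk0 _ hc0 * u⁻¹, ?_, ?_⟩
  · change _ ∈ (sU F L σ).ker
    refine mul_mem ?_ (inv_mem ?_)
    · rw [mem_ker_sU]; exact AlgEquiv.commutes _ _
    · rw [mem_ker_sU]
      change σ ((n : L) ^ 5) = (n : L) ^ 5
      rw [map_pow, map_natCast]
  · have : toPrincipalIdeal (𝓞 L) L (Units.mk0 _ hc0) = J' := by
      rw [toPrincipalIdeal_eq_iff, hJ'I, hcI, FractionalIdeal.coeIdeal_span_singleton]; rfl
    rw [map_mul, map_inv, this]
    simp [J']

lemma k_bound [IsPrincipalIdealRing (𝓞 F)] (h5 : Module.finrank F L = 5) (σ : Gal(L/F)) (hσ : σ ≠ 1)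
    (S : Finset (HeightOneSpectrum (𝓞 L)))
    (hS : ∀ p : HeightOneSpectrum (𝓞 F), ∃ P : HeightOneSpectrum (𝓞 L), P.asIdeal.LiesOver p.asIdeal ∧
      (P.asIdeal.inertia Gal(L/F) = ⊥ ∨ P ∈ S)) :
    ((sU F L σ).ker.map (toPrincipalIdeal (𝓞 L) L)).relIndex (sI F L σ).ker ≤ 5 ^ S.card := by
  apply Nat.le_of_dvd (by positivity)
  refine (Subgroup.relIndex_dvd_of_le_left _ (ker_cnt_le F L h5 σ hσ S hS)).trans ?_
  rw [Subgroup.inf_relIndex_right]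
  refine (Subgroup.relIndex_dvd_index_of_normal _ _).trans ?_
  rw [Subgroup.index_ker]
  refine (Subgroup.card_subgroup_dvd_card _).trans ?_
  have : Nat.card (Multiplicative (S → ZMod 5)) = 5 ^ S.card := by
    rw [Nat.card_congr Multiplicative.toAdd, Nat.card_fun]; simp
  rw [this]
end
end

section
open NumberField Pointwise nonZeroDivisors

section
open IsDedekindDomain
variable (L : Type*) [Field L] [NumberField L]

lemma absNorm_nat (d : ℕ) (hd : Module.finrank ℚ L = d) (N : ℕ) : Ideal.absNorm (Ideal.span {(N : 𝓞 L)}) = N ^ d := by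
  rw [Ideal.absNorm_span_singleton, ← map_natCast (algebraMap ℤ (𝓞 L)), Algebra.norm_algebraMap, RingOfIntegers.rank, hd]
  simp [Int.natAbs_pow]

lemma absNorm_x (h20 : Module.finrank ℚ L = 20) (N : ℕ) (x : 𝓞 L) (hx : x ^ 5 = N) :
    Ideal.absNorm (Ideal.span {x}) = N ^ 4 := by
  have h := absNorm_nat L 20 h20 N
  rw [← hx, ← Ideal.span_singleton_pow, map_pow] at h
  exact Nat.pow_left_injective (n := 5) (by norm_num) (by simp only [h]; ring)

lemma mem_x_of_N (N : ℕ) (x : 𝓞 L) (hx : x ^ 5 = N) (P : Ideal (𝓞 L)) [P.IsPrime] (h : (N : 𝓞 L) ∈ P) : x ∈ P := by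
  rw [← hx] at h
  exact Ideal.IsPrime.mem_of_pow_mem inferInstance _ h

lemma absNorm_over (h20 : Module.finrank ℚ L = 20) (N : ℕ) (hN : N.Prime) (x : 𝓞 L) (hx : x ^ 5 = N)
    (P : Ideal (𝓞 L)) [P.IsPrime] (h : (N : 𝓞 L) ∈ P) : ∃ f, 1 ≤ f ∧ f ≤ 4 ∧ Ideal.absNorm P = N ^ f := by
  have h1 : P ∣ Ideal.span {x} := by
    rw [Ideal.dvd_span_singleton]; exact mem_x_of_N L N x hx P h
  have h2 := Ideal.absNorm_dvd_absNorm_of_le (Ideal.dvd_iff_le.1 h1)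
  rw [absNorm_x L h20 N x hx, Nat.dvd_prime_pow hN] at h2
  obtain ⟨f, hf, hf'⟩ := h2
  refine ⟨f, ?_, hf, hf'⟩
  rcases Nat.eq_zero_or_pos f with rfl | h3
  · rw [pow_zero, Ideal.absNorm_eq_one_iff] at hf'
    exact absurd hf' (Ideal.IsPrime.ne_top inferInstance)
  · exact h3

lemma card_over (h20 : Module.finrank ℚ L = 20) (N : ℕ) (hN : N.Prime) (x : 𝓞 L) (hx : x ^ 5 = N)
    (T : Finset (HeightOneSpectrum (𝓞 L))) (hT : ∀ P ∈ T, (N : 𝓞 L) ∈ P.asIdeal) : T.card ≤ 4 := by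
  have h1 : ∏ P ∈ T, P.asIdeal ∣ Ideal.span {x} := by
    classical
    have : ∏ P ∈ T, P.asIdeal = ∏ I ∈ T.image HeightOneSpectrum.asIdeal, I := by
      rw [Finset.prod_image]
      intro a _ b _ h
      exact HeightOneSpectrum.ext h
    rw [this]
    apply Finset.prod_primes_dvd
    · intro I hI
      obtain ⟨P, hP, rfl⟩ := Finset.mem_image.1 hI
      exact P.prime
    · intro I hI
      obtain ⟨P, hP, rfl⟩ := Finset.mem_image.1 hI
      have := P.isPrime
      rw [Ideal.dvd_span_singleton]; exact mem_x_of_N L N x hx _ (hT P hP)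
  have h2 := Ideal.absNorm_dvd_absNorm_of_le (Ideal.dvd_iff_le.1 h1)
  rw [absNorm_x L h20 N x hx, map_prod] at h2
  have h3 : N ^ T.card ∣ ∏ P ∈ T, Ideal.absNorm P.asIdeal := by
    rw [← Finset.prod_const]
    apply Finset.prod_dvd_prod_of_dvd
    intro P hP
    have := P.isPrime
    obtain ⟨f, hf, _, h⟩ := absNorm_over L h20 N hN x hx P.asIdeal (hT P hP)
    rw [h]; exact dvd_pow_self _ (by omega)
  exact (Nat.pow_dvd_pow_iff_le_right hN.one_lt).1 (h3.trans h2)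

lemma finite_over (N : ℕ) (hN : N.Prime) : {P : HeightOneSpectrum (𝓞 L) | (N : 𝓞 L) ∈ P.asIdeal}.Finite := by
  have h0 : Ideal.span {(N : 𝓞 L)} ≠ 0 := by
    rw [Ne, Ideal.zero_eq_bot, Ideal.span_singleton_eq_bot]
    exact_mod_cast hN.ne_zero
  refine (Ideal.finite_factors h0).subset ?_
  intro P hP
  exact Ideal.dvd_span_singleton.2 hP
end

section
open IsDedekindDomain
variable (F L : Type*) [Field F] [NumberField F] [Field L] [NumberField L] [Algebra F L] [IsGalois F L]

lemma inertia_bot_or_top (h5 : Module.finrank F L = 5) (P : Ideal (𝓞 L)) :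
    P.inertia Gal(L/F) = ⊥ ∨ P.inertia Gal(L/F) = ⊤ := by
  have hc : Nat.card Gal(L/F) = 5 := by rw [IsGalois.card_aut_eq_finrank, h5]
  have : Fact (Nat.card Gal(L/F)).Prime := ⟨by rw [hc]; norm_num⟩
  exact (P.inertia Gal(L/F)).eq_bot_or_eq_top_of_prime_card

lemma inertia_bot (h5 : Module.finrank F L = 5) (σ : Gal(L/F)) (P : Ideal (𝓞 L)) (c : 𝓞 L) (h : σ • c - c ∉ P) :
    P.inertia Gal(L/F) = ⊥ := by
  refine (inertia_bot_or_top F L h5 P).resolve_right ?_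
  intro ht
  have : σ ∈ P.inertia Gal(L/F) := by rw [ht]; exact Subgroup.mem_top _
  exact h (this c)

lemma inertia_top (h5 : Module.finrank F L = 5) (h4 : Module.finrank ℚ F = 4) (N : ℕ) (hN : N.Prime) (x : 𝓞 L) (hx : x ^ 5 = N)
    (P : Ideal (𝓞 L)) [P.IsPrime] (h : (N : 𝓞 L) ∈ P) : P.inertia Gal(L/F) = ⊤ := by
  refine (inertia_bot_or_top F L h5 P).resolve_left ?_
  intro hb
  have hN0 : (N : 𝓞 F) ≠ 0 := by exact_mod_cast hN.ne_zero
  have hN0' : (N : 𝓞 L) ≠ 0 := by exact_mod_cast hN.ne_zero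
  let p := P.under (𝓞 F)
  have : P.LiesOver p := Ideal.over_under P
  have hp : p.IsPrime := inferInstance
  have hNp : (N : 𝓞 F) ∈ p := by
    change algebraMap (𝓞 F) (𝓞 L) _ ∈ P
    rw [map_natCast]; exact h
  have hp0 : p ≠ ⊥ := by
    intro h0
    rw [h0, Ideal.mem_bot] at hNp
    exact hN0 hNp
  have hP0 : P ≠ ⊥ := by
    intro h0
    rw [h0, Ideal.mem_bot] at h
    exact hN0' h
  have he := ram_eq_card_inertia F L p P hp0
  rw [hb, Subgroup.card_bot] at he
  have hB0 : Ideal.span {(N : 𝓞 F)} ≠ ⊥ := by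
    rw [Ne, Ideal.span_singleton_eq_bot]; exact hN0
  have hm := Ideal.IsDedekindDomain.emultiplicity_map_eq_ramificationIdx'_mul (S := 𝓞 L) hB0 (Ideal.prime_of_isPrime hp0 hp).irreducible (Ideal.prime_of_isPrime hP0 inferInstance).irreducible hP0
  rw [he, Nat.cast_one, one_mul, Ideal.map_span, Set.image_singleton, map_natCast, ← hx, ← Ideal.span_singleton_pow] at hm
  have h5' : ((5 : ℕ) : ℕ∞) ≤ emultiplicity p (Ideal.span {(N : 𝓞 F)}) := by
    rw [← hm]
    apply le_emultiplicity_of_pow_dvd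
    apply pow_dvd_pow_of_dvd
    rw [Ideal.dvd_span_singleton]; exact mem_x_of_N L N x hx P h
  have h6 := pow_dvd_of_le_emultiplicity h5'
  have h7 := Ideal.absNorm_dvd_absNorm_of_le (Ideal.dvd_iff_le.1 h6)
  rw [absNorm_nat F 4 h4, map_pow] at h7
  have h8 : Ideal.absNorm p ∣ N ^ 4 := (dvd_pow_self _ (by norm_num)).trans h7
  rw [Nat.dvd_prime_pow hN] at h8
  obtain ⟨f, hf, hf'⟩ := h8
  rw [hf', ← pow_mul, Nat.pow_dvd_pow_iff_le_right hN.one_lt] at h7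
  have : f = 0 := by omega
  rw [this, pow_zero, Ideal.absNorm_eq_one_iff] at hf'
  exact hp.ne_top hf'

end
end

section
open NumberField Pointwise nonZeroDivisors

section
open IsDedekindDomain
variable (F L : Type*) [Field F] [NumberField F] [Field L] [NumberField L] [Algebra F L] [IsGalois F L]

lemma loc_total (P : Ideal (𝓞 L)) [P.IsPrime] (hP : P ≠ ⊥) (a s : 𝓞 L) :
    (∃ j c, j ∉ P ∧ j * s = a * c) ∨ (∃ j c, j ∉ P ∧ j * a = s * c) := by
  have : IsDiscreteValuationRing (Localization.AtPrime P) :=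
    IsLocalization.AtPrime.isDiscreteValuationRing_of_dedekind_domain (𝓞 L) hP _
  have key : ∀ a s : 𝓞 L, algebraMap _ (Localization.AtPrime P) a ∣ algebraMap _ (Localization.AtPrime P) s → ∃ j c, j ∉ P ∧ j * s = a * c := by
    rintro a s ⟨w, hw⟩
    obtain ⟨c, j, rfl⟩ := IsLocalization.exists_mk'_eq P.primeCompl w
    refine ⟨j, c, j.2, ?_⟩
    apply IsLocalization.injective (Localization.AtPrime P) P.primeCompl_le_nonZeroDivisors
    rw [map_mul, map_mul, hw, mul_comm, mul_assoc, IsLocalization.mk'_spec]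
  rcases ValuationRing.dvd_total (algebraMap _ (Localization.AtPrime P) a) (algebraMap _ (Localization.AtPrime P) s) with h | h
  · exact Or.inl (key _ _ h)
  · exact Or.inr (key _ _ h)

/-- product of the conjugates -/
noncomputable def cn (σ : Gal(L/F)) (c : 𝓞 L) : 𝓞 L := c * σ • c * σ ^ 2 • c * σ ^ 3 • c * σ ^ 4 • c

lemma cn_mul (σ : Gal(L/F)) (c d : 𝓞 L) : cn F L σ (c * d) = cn F L σ c * cn F L σ d := by
  simp only [cn, smul_mul']; ring

lemma cn_coe (h5 : Module.finrank F L = 5) (σ : Gal(L/F)) (hσ : σ ≠ 1) (c : 𝓞 L) :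
    algebraMap (𝓞 L) L (cn F L σ c) = algebraMap F L (Algebra.norm F (algebraMap (𝓞 L) L c)) := by
  have hc : Nat.card Gal(L/F) = 5 := by rw [IsGalois.card_aut_eq_finrank, h5]
  rw [Algebra.norm_eq_prod_automorphisms, prod_gal5 hc σ hσ]
  rfl

lemma cn_sub (σ : Gal(L/F)) (P : Ideal (𝓞 L)) (hP : P.inertia Gal(L/F) = ⊤) (c : 𝓞 L) :
    Ideal.Quotient.mk P (cn F L σ c) = Ideal.Quotient.mk P c ^ 5 := by
  have h : ∀ g : Gal(L/F), Ideal.Quotient.mk P (g • c) = Ideal.Quotient.mk P c := by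
    intro g
    rw [Ideal.Quotient.eq]
    have : g ∈ P.inertia Gal(L/F) := by rw [hP]; exact Subgroup.mem_top _
    exact this c
  simp only [cn, map_mul, h]; ring

lemma cyc_dvd (R : Type*) [CommRing R] (z : R) (hz : 1 + z + z ^ 2 + z ^ 3 + z ^ 4 = 0) :
    (5 : R) = (1 - z) * (4 + 3 * z + 2 * z ^ 2 + z ^ 3) := by
  linear_combination (1 : R) * hz

lemma no_order25 (N f : ℕ) (h5 : N % 5 = 1) (h25 : N % 25 ≠ 1) (hf : 1 ≤ f) (hf4 : f ≤ 4) (h : 25 ∣ N ^ f - 1) : False := by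
  have h1 : N ^ f % 25 = 1 := by
    have : 0 < N ^ f := by apply pow_pos; omega
    omega
  rw [Nat.pow_mod] at h1
  have h2 : N % 25 < 25 := Nat.mod_lt _ (by norm_num)
  have h3 : (N % 25) % 5 = 1 := by omega
  generalize N % 25 = m at *
  interval_cases f <;> interval_cases m <;> omega

lemma not_norm (h5 : Module.finrank F L = 5) (σ : Gal(L/F)) (hσ : σ ≠ 1) (h4 : Module.finrank ℚ F = 4) (h20 : Module.finrank ℚ L = 20)
    (N : ℕ) (hN : N.Prime) (hN5 : N % 5 = 1) (hN25 : N % 25 ≠ 1) (x : 𝓞 L) (hx : x ^ 5 = N)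
    (ζ : F) (hζ : IsPrimitiveRoot ζ 5) : ¬ ∃ y : L, Algebra.norm F y = ζ := by
  rintro ⟨y, hy⟩
  -- the prime above N
  have hN0' : (N : 𝓞 L) ≠ 0 := by exact_mod_cast hN.ne_zero
  obtain ⟨P, hPmax, hNP⟩ : ∃ P : Ideal (𝓞 L), P.IsMaximal ∧ (N : 𝓞 L) ∈ P := by
    obtain ⟨P, hP, h⟩ := Ideal.exists_le_maximal (Ideal.span {(N : 𝓞 L)}) (by
      intro h
      have := absNorm_nat L 20 h20 N
      rw [h, Ideal.absNorm_top] at this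
      have h2 := Nat.one_lt_pow (n := 20) (by norm_num) hN.one_lt
      omega)
    exact ⟨P, hP, h (Ideal.mem_span_singleton_self _)⟩
  have hPprime : P.IsPrime := hPmax.isPrime
  have hP0 : P ≠ ⊥ := by
    intro h0
    rw [h0, Ideal.mem_bot] at hNP
    exact hN0' hNP
  have hin := inertia_top F L h5 h4 N hN x hx P hNP
  -- z
  let z : 𝓞 L := algebraMap (𝓞 F) (𝓞 L) hζ.toInteger
  have hzc : (z : L) = algebraMap F L ζ := rfl
  have hzprim : IsPrimitiveRoot z 5 := hζ.toInteger_isPrimitiveRoot.map_of_injective (FaithfulSMul.algebraMap_injective (𝓞 F) (𝓞 L))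
  have hgeom : 1 + z + z ^ 2 + z ^ 3 + z ^ 4 = 0 := by
    have := hzprim.geom_sum_eq_zero (by norm_num)
    simpa [Finset.sum_range_succ] using this
  have h5P : (5 : 𝓞 L) ∉ P := by
    intro h
    apply hPprime.ne_top
    rw [Ideal.eq_top_iff_one]
    have h1 : (N : 𝓞 L) = 5 * ((N / 5 : ℕ) : 𝓞 L) + 1 := by
      have : N = 5 * (N / 5) + 1 := by omega
      exact_mod_cast congrArg (Nat.cast : ℕ → 𝓞 L) this
    have h2 : (1 : 𝓞 L) = N - 5 * ((N / 5 : ℕ) : 𝓞 L) := by rw [h1]; ring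
    rw [h2]
    exact P.sub_mem hNP (P.mul_mem_right _ h)
  have hz1 : 1 - z ∉ P := by
    intro h
    apply h5P
    rw [cyc_dvd _ z hgeom]
    exact P.mul_mem_right _ h
  have hzq : Ideal.Quotient.mk P z ≠ 1 := by
    intro h
    apply hz1
    rw [← Ideal.Quotient.eq, map_one, h]
  have hcnP : ∀ c, c ∈ P ↔ cn F L σ c ∈ P := by
    intro c
    rw [← Ideal.Quotient.eq_zero_iff_mem, ← Ideal.Quotient.eq_zero_iff_mem, cn_sub F L σ P hin]
    constructor
    · intro h; rw [h]; ring
    · intro h; exact pow_eq_zero_iff (by norm_num) |>.1 h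
  obtain ⟨a, s, hs, hys⟩ := IsFractionRing.div_surjective (A := 𝓞 L) y
  have hs0 : s ≠ 0 := nonZeroDivisors.ne_zero hs
  have hsL : algebraMap (𝓞 L) L s ≠ 0 := by
    intro h; exact hs0 (RingOfIntegers.coe_injective (by rw [map_zero]; exact h))
  have hyas : algebraMap (𝓞 L) L a = y * algebraMap (𝓞 L) L s := by rw [← hys]; exact (div_mul_cancel₀ _ hsL).symm
  have hcnas : cn F L σ a = z * cn F L σ s := by
    apply RingOfIntegers.coe_injective
    rw [cn_coe F L h5 σ hσ, hyas, map_mul, hy, map_mul, map_mul, cn_coe F L h5 σ hσ]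
    rfl
  have hcns0 : cn F L σ s ≠ 0 := by
    intro h
    have h1 := cn_coe F L h5 σ hσ s
    rw [h, map_zero] at h1
    have h2 := (map_eq_zero_iff _ (algebraMap F L).injective).1 h1.symm
    exact hsL (Algebra.norm_eq_zero_iff.1 h2)
  have key : ∃ c j, j ∉ P ∧ c ∉ P ∧ cn F L σ c = z * cn F L σ j := by
    rcases loc_total L P hP0 a s with ⟨j, c, hj, h⟩ | ⟨j, c, hj, h⟩
    · have h1 := congrArg (cn F L σ) h
      rw [cn_mul, cn_mul, hcnas] at h1
      have h2 : cn F L σ j = z * cn F L σ c := by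
        apply mul_right_cancel₀ hcns0
        rw [h1]; ring
      refine ⟨j, c, ?_, hj, h2⟩
      intro hc
      apply hj
      rw [hcnP, h2]
      exact P.mul_mem_left _ ((hcnP c).1 hc)
    · have h1 := congrArg (cn F L σ) h
      rw [cn_mul, cn_mul, hcnas] at h1
      have h2 : cn F L σ c = z * cn F L σ j := by
        apply mul_right_cancel₀ hcns0
        rw [mul_comm, ← h1]; ring
      refine ⟨c, j, hj, ?_, h2⟩
      intro hc
      have h3 := (hcnP c).1 hc
      rw [h2] at h3
      rcases hPprime.mem_or_mem h3 with h4 | h4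
      · have : z ^ 5 ∈ P := P.pow_mem_of_mem h4 5 (by norm_num)
        rw [hzprim.pow_eq_one] at this
        exact hPprime.ne_top ((Ideal.eq_top_iff_one _).2 this)
      · exact hj ((hcnP j).2 h4)
  obtain ⟨c, j, hj, hc, hcj⟩ := key
  let k := 𝓞 L ⧸ P
  letI : Field k := Ideal.Quotient.field P
  have hjk : (Ideal.Quotient.mk P j : k) ≠ 0 := by
    rw [Ne, Ideal.Quotient.eq_zero_iff_mem]; exact hj
  have hck : (Ideal.Quotient.mk P c : k) ≠ 0 := by
    rw [Ne, Ideal.Quotient.eq_zero_iff_mem]; exact hc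
  let t : k := Ideal.Quotient.mk P c / Ideal.Quotient.mk P j
  have ht5 : t ^ 5 = Ideal.Quotient.mk P z := by
    have h1 := congrArg (Ideal.Quotient.mk P) hcj
    rw [map_mul, cn_sub F L σ P hin, cn_sub F L σ P hin] at h1
    change (Ideal.Quotient.mk P c / Ideal.Quotient.mk P j : k) ^ 5 = _
    rw [div_pow, div_eq_iff (pow_ne_zero _ hjk)]
    exact h1
  have ht0 : t ≠ 0 := div_ne_zero hck hjk
  let u : kˣ := Units.mk0 t ht0
  have hu : orderOf u = 5 ^ (1 + 1) := by
    have : Fact (Nat.Prime 5) := ⟨by norm_num⟩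
    apply orderOf_eq_prime_pow
    · intro h
      have h1 := congrArg (Units.val) h
      rw [Units.val_pow_eq_pow_val] at h1
      change t ^ (5 ^ 1) = 1 at h1
      rw [pow_one, ht5] at h1
      exact hzq h1
    · ext1
      rw [Units.val_pow_eq_pow_val]
      change t ^ (5 ^ 2) = 1
      rw [show 5 ^ 2 = 5 * 5 by norm_num, pow_mul, ht5, ← map_pow, hzprim.pow_eq_one, map_one]
  have hd := orderOf_dvd_natCard u
  obtain ⟨f, hf1, hf4, hf⟩ := absNorm_over L h20 N hN x hx P hNP
  have hck : Nat.card k = N ^ f := by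
    rw [← hf, Ideal.absNorm_apply, Submodule.cardQuot_apply]
  rw [hu, Nat.card_units, hck] at hd
  exact no_order25 N f hN5 hN25 hf1 hf4 hd
end
end

section
open NumberField Pointwise nonZeroDivisors

section
open IsDedekindDomain
variable (F L : Type*) [Field F] [NumberField F] [Field L] [NumberField L] [Algebra F L] [IsGalois F L]

lemma beta_exists (N : ℕ) (hN25 : N % 25 = 1) (x z : 𝓞 L) (hx : x ^ 5 = N) (hz : 1 + z + z ^ 2 + z ^ 3 + z ^ 4 = 0) :
    ∃ β : 𝓞 L, (1 - z) * β = x - 1 := by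
  have hl0 : (1 - z) ≠ 0 := by
    intro h
    have h1 : z = 1 := (sub_eq_zero.1 h).symm
    rw [h1] at hz
    norm_num at hz
  have hlL : algebraMap (𝓞 L) L (1 - z) ≠ 0 := by
    rw [Ne, map_eq_zero_iff _ (FaithfulSMul.algebraMap_injective (𝓞 L) L)]; exact hl0
  set l := 1 - z with hl
  obtain ⟨u, hu⟩ : ∃ u : 𝓞 L, 5 = l ^ 4 * u := by
    refine ⟨(1 + z) * (1 + z + z ^ 2) * (1 + z + z ^ 2 + z ^ 3), ?_⟩
    have hz5 : z ^ 5 = 1 := by linear_combination (z - 1) * hz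
    have h2 : (1 - z) ^ 4 * ((1 + z) * (1 + z + z ^ 2) * (1 + z + z ^ 2 + z ^ 3)) = (1 - z) * (1 - z ^ 2) * (1 - z ^ 3) * (1 - z ^ 4) := by ring
    rw [hl, h2]
    have h3 : (1 - z) * (1 - z ^ 4) = 2 - z - z ^ 4 := by linear_combination hz5
    have h4 : (1 - z ^ 2) * (1 - z ^ 3) = 2 - z ^ 2 - z ^ 3 := by linear_combination hz5
    have h5 : (2 - z - z ^ 4) * (2 - z ^ 2 - z ^ 3) = 5 := by
      linear_combination (-1 : 𝓞 L) * hz + (z ^ 2 + z - (0 : 𝓞 L)) * hz5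
    calc (5 : 𝓞 L) = (2 - z - z ^ 4) * (2 - z ^ 2 - z ^ 3) := h5.symm
      _ = _ := by rw [← h3, ← h4]; ring
  let m := N / 25
  have hm : (N : 𝓞 L) = 1 + (l ^ 4 * u) * (l ^ 4 * u) * m := by
    rw [← hu]
    have : N = 1 + 5 * 5 * m := by omega
    exact_mod_cast congrArg (Nat.cast : ℕ → 𝓞 L) this
  let b : L := algebraMap (𝓞 L) L (x - 1) / algebraMap (𝓞 L) L l
  have hb : algebraMap (𝓞 L) L l * b = algebraMap (𝓞 L) L (x - 1) := mul_div_cancel₀ _ hlL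
  have hbi : IsIntegral (𝓞 L) b := by
    let q : Polynomial (𝓞 L) := Polynomial.X ^ 5 + (Polynomial.C (l ^ 3 * u) * Polynomial.X ^ 4 + Polynomial.C (2 * u * l ^ 2) * Polynomial.X ^ 3
      + Polynomial.C (2 * u * l) * Polynomial.X ^ 2 + Polynomial.C u * Polynomial.X - Polynomial.C (l ^ 3 * u ^ 2 * m))
    refine ⟨q, ?_, ?_⟩
    · apply Polynomial.monic_X_pow_add
      compute_degree!
    · have h1 : algebraMap (𝓞 L) L x = 1 + algebraMap (𝓞 L) L l * b := by rw [hb, map_sub, map_one]; ring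
      have h2 : (algebraMap (𝓞 L) L x) ^ 5 = 1 + algebraMap (𝓞 L) L ((l ^ 4 * u) * (l ^ 4 * u) * m) := by
        rw [← map_pow, hx, hm, map_add, map_one]
      have h3 := congrArg (algebraMap (𝓞 L) L) hu
      simp only [q, Polynomial.eval₂_add, Polynomial.eval₂_sub, Polynomial.eval₂_mul, Polynomial.eval₂_pow, Polynomial.eval₂_X, Polynomial.eval₂_C]
      rw [h1] at h2
      simp only [map_mul, map_pow, map_ofNat] at h2 h3 ⊢
      have h4 : (algebraMap (𝓞 L) L l) ^ 5 ≠ 0 := pow_ne_zero _ hlL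
      apply mul_left_cancel₀ h4
      rw [mul_zero]
      generalize algebraMap (𝓞 L) L l = l' at *
      generalize algebraMap (𝓞 L) L u = u' at *
      generalize algebraMap (𝓞 L) L (m : 𝓞 L) = m' at *
      linear_combination h2 - (l' ^ 4 * b ^ 4 + 2 * l' ^ 3 * b ^ 3 + 2 * l' ^ 2 * b ^ 2 + l' * b) * h3
  obtain ⟨β, hβ⟩ := IsIntegrallyClosed.isIntegral_iff.1 hbi
  refine ⟨β, RingOfIntegers.coe_injective ?_⟩
  rw [map_mul, hβ, hb]

lemma main_FL [IsCyclotomicExtension {5} ℚ F] (h5 : Module.finrank F L = 5) (h20 : Module.finrank ℚ L = 20)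
    (σ : Gal(L/F)) (hσ : σ ≠ 1) (N : ℕ) (hN : N.Prime) (hN5 : N % 5 = 1) (x : 𝓞 L) (hx : x ^ 5 = N)
    (ζ : F) (hζ : IsPrimitiveRoot ζ 5) (hσx : σ (x : L) = algebraMap F L ζ * x) :
    (toPrincipalIdeal (𝓞 L) L).range.relIndex ((toPrincipalIdeal (𝓞 L) L).range.comap (sI F L σ)) * 26 ≤ 5 ^ 6 := by
  classical
  have hpid : IsPrincipalIdealRing (𝓞 F) := IsCyclotomicExtension.Rat.five_pid F
  have h4 : Module.finrank ℚ F = 4 := by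
    rw [IsCyclotomicExtension.finrank (n := 5) F (Polynomial.cyclotomic.irreducible_rat (by norm_num))]
    decide
  have hrF := rank_F_le F
  have ha := ha_bound F L h5 σ hσ (rank_L_ge L h20) hrF ζ hζ
  have hq := q_bound F L h5 σ hσ hrF ζ hζ
  have hq0 := ne_zero_of_dvd_ne_zero (by norm_num) hq
  let z : 𝓞 L := algebraMap (𝓞 F) (𝓞 L) hζ.toInteger
  have hzprim : IsPrimitiveRoot z 5 := hζ.toInteger_isPrimitiveRoot.map_of_injective (FaithfulSMul.algebraMap_injective (𝓞 F) (𝓞 L))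
  have hgeom : 1 + z + z ^ 2 + z ^ 3 + z ^ 4 = 0 := by
    have := hzprim.geom_sum_eq_zero (by norm_num)
    simpa [Finset.sum_range_succ] using this
  have hgeomF : 1 + hζ.toInteger + hζ.toInteger ^ 2 + hζ.toInteger ^ 3 + hζ.toInteger ^ 4 = 0 := by
    have := hζ.toInteger_isPrimitiveRoot.geom_sum_eq_zero (by norm_num)
    simpa [Finset.sum_range_succ] using this
  have hσx' : σ • x = z * x := RingOfIntegers.ext hσx
  have hσz : σ • z = z := RingOfIntegers.ext (AlgEquiv.commutes σ ζ)
  -- existence of primes above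
  have hex : ∀ p : HeightOneSpectrum (𝓞 F), ∃ P : HeightOneSpectrum (𝓞 L), P.asIdeal.LiesOver p.asIdeal := by
    intro p
    have := p.isMaximal
    obtain ⟨P, hP, hPp⟩ := Ideal.exists_maximal_ideal_liesOver_of_isIntegral (S := 𝓞 L) p.asIdeal
    exact ⟨⟨P, hP.isPrime, Ideal.ne_bot_of_liesOver_of_ne_bot p.ne_bot P⟩, hPp⟩
  -- 5 and N are coprime
  have hcop : ∀ P : HeightOneSpectrum (𝓞 L), (5 : 𝓞 L) ∈ P.asIdeal → (N : 𝓞 L) ∉ P.asIdeal := by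
    intro P h hNP
    apply P.isPrime.ne_top
    rw [Ideal.eq_top_iff_one]
    have h1 : (N : 𝓞 L) = 5 * ((N / 5 : ℕ) : 𝓞 L) + 1 := by
      have : N = 5 * (N / 5) + 1 := by omega
      exact_mod_cast congrArg (Nat.cast : ℕ → 𝓞 L) this
    have h2 : (1 : 𝓞 L) = N - 5 * ((N / 5 : ℕ) : 𝓞 L) := by rw [h1]; ring
    rw [h2]
    exact P.asIdeal.sub_mem hNP (P.asIdeal.mul_mem_right _ h)
  have hxP : ∀ P : HeightOneSpectrum (𝓞 L), (N : 𝓞 L) ∉ P.asIdeal → x ∉ P.asIdeal := by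
    intro P h hxP
    apply h
    rw [← hx]
    exact P.asIdeal.pow_mem_of_mem hxP 5 (by norm_num)
  have hunr : ∀ P : HeightOneSpectrum (𝓞 L), (5 : 𝓞 L) ∉ P.asIdeal → (N : 𝓞 L) ∉ P.asIdeal → P.asIdeal.inertia Gal(L/F) = ⊥ := by
    intro P h1 h2
    apply inertia_bot F L h5 σ _ x
    rw [hσx']
    intro h
    have h3 : (1 - z) * x ∈ P.asIdeal := by
      rw [show (1 - z) * x = -(z * x - x) by ring]
      exact neg_mem h
    rcases P.isPrime.mem_or_mem h3 with h4 | h4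
    · apply h1
      rw [cyc_dvd _ z hgeom]
      exact P.asIdeal.mul_mem_right _ h4
    · exact hxP P h2 h4
  let T : Finset (HeightOneSpectrum (𝓞 L)) := (finite_over L N hN).toFinset
  have hTmem : ∀ P, P ∈ T ↔ (N : 𝓞 L) ∈ P.asIdeal := by intro P; simp [T]
  have hT : T.card ≤ 4 := card_over L h20 N hN x hx T (fun P hP => (hTmem P).1 hP)
  by_cases hN25 : N % 25 = 1
  · obtain ⟨β, hβ⟩ := beta_exists L N hN25 x z hx hgeom
    have hk := k_bound F L h5 σ hσ T (by
      intro p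
      obtain ⟨P, hP⟩ := hex p
      refine ⟨P, hP, ?_⟩
      by_cases h1 : (N : 𝓞 L) ∈ P.asIdeal
      · exact Or.inr ((hTmem P).2 h1)
      left
      by_cases h2 : (5 : 𝓞 L) ∈ P.asIdeal
      · apply inertia_bot F L h5 σ _ β
        have hl0 : (1 - z) ≠ 0 := by
          intro h
          have h1 : z = 1 := (sub_eq_zero.1 h).symm
          rw [h1] at hgeom
          norm_num at hgeom
        have : σ • β - β = -x := by
          apply mul_left_cancel₀ hl0
          have h3 := congrArg (fun w : 𝓞 L => σ • w) hβ
          simp only [smul_mul', smul_sub, smul_one, hσz, hσx'] at h3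
          linear_combination h3 - hβ
        rw [this]
        intro h
        exact hxP P h1 (by simpa using h)
      · exact hunr P h2 h1)
    have := ambig_FL F L h5 σ hσ _ 25 26 hk (Nat.le_of_dvd (by norm_num) hq) hq0 ha
    refine this.trans ?_
    calc 25 * 5 ^ T.card ≤ 25 * 5 ^ 4 := Nat.mul_le_mul_left _ (Nat.pow_le_pow_right (by norm_num) hT)
      _ = 5 ^ 6 := by norm_num
  · have hq5 := q_bound' F L h5 σ hσ hrF ζ hζ (not_norm F L h5 σ hσ h4 h20 N hN hN5 hN25 x hx ζ hζ)
    have : Fact (Nat.Prime 5) := ⟨by norm_num⟩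
    have hprime : Prime (hζ.toInteger - 1) := hζ.zeta_sub_one_prime'
    let p0 : HeightOneSpectrum (𝓞 F) := ⟨Ideal.span {hζ.toInteger - 1}, (Ideal.span_singleton_prime hprime.ne_zero).2 hprime,
      by rw [Ne, Ideal.span_singleton_eq_bot]; exact hprime.ne_zero⟩
    obtain ⟨P0, hP0⟩ := hex p0
    have hk := k_bound F L h5 σ hσ (insert P0 T) (by
      intro p
      by_cases h5p : (5 : 𝓞 F) ∈ p.asIdeal
      · refine ⟨P0, ?_, Or.inr (Finset.mem_insert_self _ _)⟩
        have hmem : 1 - hζ.toInteger ∈ p.asIdeal := by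
          have hz5 : hζ.toInteger ^ 5 = 1 := hζ.toInteger_isPrimitiveRoot.pow_eq_one
          generalize hζ.toInteger = w at *
          have h1 : (1 - w) ^ 4 = 5 * (-w + w ^ 2 - w ^ 3) := by
            linear_combination hgeomF
          have h2 : (1 - w) ^ 4 ∈ p.asIdeal := by rw [h1]; exact p.asIdeal.mul_mem_right _ h5p
          exact p.isPrime.mem_of_pow_mem _ h2
        have hle : p0.asIdeal ≤ p.asIdeal := by
          change Ideal.span _ ≤ _
          rw [Ideal.span_singleton_le_iff_mem, ← neg_sub]
          exact neg_mem hmem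
        have : p0.asIdeal = p.asIdeal := p0.isMaximal.eq_of_le p.isPrime.ne_top hle
        rw [← this]; exact hP0
      · obtain ⟨P, hP⟩ := hex p
        refine ⟨P, hP, ?_⟩
        by_cases h1 : (N : 𝓞 L) ∈ P.asIdeal
        · exact Or.inr (Finset.mem_insert_of_mem ((hTmem P).2 h1))
        left
        refine hunr P ?_ h1
        intro h2
        apply h5p
        rw [hP.over]
        change algebraMap (𝓞 F) (𝓞 L) 5 ∈ P.asIdeal
        rw [map_ofNat]; exact h2)
    have := ambig_FL F L h5 σ hσ _ 5 26 hk hq5 hq0 ha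
    refine this.trans ?_
    calc 5 * 5 ^ (insert P0 T).card ≤ 5 * 5 ^ 5 := Nat.mul_le_mul_left _ (Nat.pow_le_pow_right (by norm_num) ((Finset.card_insert_le _ _).trans (by omega)))
      _ = 5 ^ 6 := by norm_num

end
end

section
open NumberField Pointwise nonZeroDivisors

section
open IntermediateField Polynomial
variable (K F L : Type*) [Field K] [NumberField K] [Field F] [NumberField F] [Field L] [NumberField L]
  [Algebra K L] [Algebra F L]

lemma finrank_cyc_le [IsCyclotomicExtension {5} K L] : Module.finrank K L ≤ 4 := by
  have hz := IsCyclotomicExtension.zeta_spec 5 K L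
  rw [(hz.powerBasis K).finrank, ← (hz.powerBasis K).natDegree_minpoly, hz.powerBasis_gen K]
  have hd : minpoly K (IsCyclotomicExtension.zeta 5 K L) ∣ cyclotomic 5 K := by
    apply minpoly.dvd
    rw [aeval_def, eval₂_eq_eval_map, map_cyclotomic]
    exact (isRoot_cyclotomic_iff.2 hz)
  refine (natDegree_le_of_dvd hd (cyclotomic_ne_zero _ _)).trans ?_
  rw [natDegree_cyclotomic]
  decide

lemma cyc_irred [IsCyclotomicExtension {5} K L] (h4 : Module.finrank K L = 4) : Irreducible (cyclotomic 5 K) := by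
  have hz := IsCyclotomicExtension.zeta_spec 5 K L
  have hd : minpoly K (IsCyclotomicExtension.zeta 5 K L) ∣ cyclotomic 5 K := by
    apply minpoly.dvd
    rw [aeval_def, eval₂_eq_eval_map, map_cyclotomic]
    exact (isRoot_cyclotomic_iff.2 hz)
  have hInt : IsIntegral K (IsCyclotomicExtension.zeta 5 K L) := Algebra.IsIntegral.isIntegral _
  have he : cyclotomic 5 K = minpoly K (IsCyclotomicExtension.zeta 5 K L) := by
    refine (eq_of_monic_of_dvd_of_natDegree_le (minpoly.monic hInt) (cyclotomic.monic _ _) hd ?_)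
    have : (minpoly K (IsCyclotomicExtension.zeta 5 K L)).natDegree = 4 := by
      refine Eq.trans ?_ h4
      rw [(hz.powerBasis K).finrank, ← (hz.powerBasis K).natDegree_minpoly, hz.powerBasis_gen K]
    rw [this, natDegree_cyclotomic]
    decide
  rw [he]
  exact minpoly.irreducible hInt

lemma upper_abs [IsCyclotomicExtension {5} K L] [IsCyclotomicExtension {5} ℚ F]
    (N : ℕ) (hN : N.Prime) (hN5 : N % 5 = 1) (α : K) (hα : α ^ 5 = (N : K)) (hKdeg : Module.finrank ℚ K = 5) :
    Module.finrank (ZMod 5) (TensorProduct ℤ (ZMod 5) (Additive (ClassGroup (𝓞 K)))) ≤ 3 := by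
  have hF4 : Module.finrank ℚ F = 4 := by
    rw [IsCyclotomicExtension.finrank (n := 5) F (Polynomial.cyclotomic.irreducible_rat (by norm_num))]
    decide
  have hle := finrank_cyc_le K L
  have e1 := Module.finrank_mul_finrank ℚ K L
  have e2 := Module.finrank_mul_finrank ℚ F L
  have hpos : 0 < Module.finrank K L := Module.finrank_pos
  rw [hKdeg] at e1
  rw [hF4] at e2
  have h4 : Module.finrank K L = 4 := by omega
  have h20 : Module.finrank ℚ L = 20 := by omega
  have h5 : Module.finrank F L = 5 := by omega
  have hirr := cyc_irred K L h4
  have hz0 := IsCyclotomicExtension.zeta_spec 5 ℚ F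
  set ζ0 := IsCyclotomicExtension.zeta 5 ℚ F with hζ0
  have hzL : IsPrimitiveRoot (algebraMap F L ζ0) 5 := hz0.map_of_injective (algebraMap F L).injective
  set x : L := algebraMap K L α with hxdef
  have hx5 : x ^ 5 = (N : L) := by rw [hxdef, ← map_pow, hα, map_natCast]
  have hx0 : x ≠ 0 := by
    intro h
    rw [h] at hx5
    have : (N : L) = 0 := by rw [← hx5]; norm_num
    exact hN.ne_zero (by exact_mod_cast this)
  have htop : F⟮x⟯ = ⊤ := by
    have hd : Module.finrank F F⟮x⟯ ∣ 5 := by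
      rw [← h5]; exact ⟨_, (Module.finrank_mul_finrank F F⟮x⟯ L).symm⟩
    rcases (Nat.dvd_prime (by norm_num)).1 hd with h | h
    · exfalso
      rw [IntermediateField.finrank_adjoin_simple_eq_one_iff] at h
      obtain ⟨y, hy⟩ := IntermediateField.mem_bot.1 h
      have hy5 : y ^ 5 = (N : F) := by
        apply (algebraMap F L).injective
        rw [map_pow, hy, hx5, map_natCast]
      have := minpoly_alpha N hN F y hy5
      have h6 := minpoly.natDegree_le (A := ℚ) y
      rw [this, natDegree_X_pow_sub_C, hF4] at h6
      omega
    · exact IntermediateField.eq_of_le_of_finrank_eq le_top (by rw [h, IntermediateField.finrank_top', h5])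
  have hprim : (primitiveRoots (Module.finrank F L) F).Nonempty := by
    rw [h5]; exact ⟨ζ0, (mem_primitiveRoots (by norm_num)).2 hz0⟩
  have hax : x ^ (Module.finrank F L) = algebraMap F L (N : F) := by rw [h5, hx5, map_natCast]
  have hgal : IsGalois F L := by
    have := isSplittingField_X_pow_sub_C_of_root_adjoin_eq_top hprim hax htop
    exact isGalois_of_isSplittingField_X_pow_sub_C hprim (irreducible_X_pow_sub_C_of_root_adjoin_eq_top hax htop) L
  have hcard : Nat.card Gal(L/F) = 5 := by rw [IsGalois.card_aut_eq_finrank, h5]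
  obtain ⟨σ, hσ⟩ : ∃ σ : Gal(L/F), σ ≠ 1 := by
    by_contra hc
    push Not at hc
    have : Subsingleton Gal(L/F) := ⟨fun a b => by rw [hc a, hc b]⟩
    have := Nat.card_of_subsingleton (1 : Gal(L/F))
    omega
  have hadj : ∀ (P : L → Prop), (∀ f : F, P (algebraMap F L f)) → P x → (∀ a b, P a → P b → P (a + b)) →
      (∀ a b, P a → P b → P (a * b)) → ∀ y, P y := by
    intro P hf hPx hadd hmul y
    have hy : y ∈ Algebra.adjoin F {x} := by
      rw [← IntermediateField.adjoin_simple_toSubalgebra_of_isAlgebraic (Algebra.IsAlgebraic.isAlgebraic x), htop]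
      trivial
    induction hy using Algebra.adjoin_induction with
    | mem a ha => rw [Set.mem_singleton_iff.1 ha]; exact hPx
    | algebraMap r => exact hf r
    | add a b _ _ h1 h2 => exact hadd a b h1 h2
    | mul a b _ _ h1 h2 => exact hmul a b h1 h2
  have hσxne : σ x ≠ x := by
    intro h
    apply hσ
    ext y
    refine hadj (fun y => σ y = y) (fun f => σ.commutes f) h ?_ ?_ y
    · intro a b ha hb; simp only [map_add, ha, hb]
    · intro a b ha hb; simp only [map_mul, ha, hb]
  have hσx5 : (σ x) ^ 5 = (N : L) := by rw [← map_pow, hx5, map_natCast]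
  have hw5 : (σ x / x) ^ 5 = 1 := by
    rw [div_pow, hσx5, hx5]
    exact div_self (by exact_mod_cast hN.ne_zero)
  obtain ⟨i, -, hi⟩ := hzL.eq_pow_of_pow_eq_one hw5
  have hσx : σ x = algebraMap F L (ζ0 ^ i) * x := by
    rw [map_pow, hi, div_mul_cancel₀ _ hx0]
  have hζ : IsPrimitiveRoot (ζ0 ^ i) 5 := by
    have h1 : (ζ0 ^ i) ^ 5 = 1 := by rw [← pow_mul, mul_comm, pow_mul, hz0.pow_eq_one, one_pow]
    have h2 : ζ0 ^ i ≠ 1 := by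
      intro h
      rw [h, map_one, one_mul] at hσx
      exact hσxne hσx
    have : Fact (Nat.Prime 5) := ⟨by norm_num⟩
    rw [IsPrimitiveRoot.iff_orderOf]
    exact orderOf_eq_prime h1 h2
  have hzK := IsCyclotomicExtension.zeta_spec 5 K L
  have hμ : IsPrimitiveRoot ((IsCyclotomicExtension.zeta 5 K L) ^ 2) 5 := hzK.pow_of_coprime 2 (by norm_num)
  let δ : Gal(L/K) := IsCyclotomicExtension.fromZetaAut hμ hirr
  have hδz : δ (IsCyclotomicExtension.zeta 5 K L) = (IsCyclotomicExtension.zeta 5 K L) ^ 2 :=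
    IsCyclotomicExtension.fromZetaAut_spec hμ hirr
  have hδw : ∀ w : L, w ^ 5 = 1 → δ w = w ^ 2 := by
    intro w hw
    obtain ⟨j, -, rfl⟩ := hzK.eq_pow_of_pow_eq_one hw
    rw [map_pow, hδz, ← pow_mul, ← pow_mul, mul_comm]
  have hδx : δ x = x := δ.commutes α
  have hδF : ∀ f : F, σ (δ (algebraMap F L f)) = δ (algebraMap F L f) := by
    intro f
    let i1 : F →ₐ[ℚ] L := RingHom.toRatAlgHom (((σ : L →+* L).comp (δ : L →+* L)).comp (algebraMap F L))
    let i2 : F →ₐ[ℚ] L := RingHom.toRatAlgHom ((δ : L →+* L).comp (algebraMap F L))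
    have : i1 = i2 := by
      refine (hz0.powerBasis ℚ).algHom_ext ?_
      rw [hz0.powerBasis_gen ℚ]
      change σ (δ (algebraMap F L ζ0)) = δ (algebraMap F L ζ0)
      rw [hδw _ hzL.pow_eq_one, map_pow, σ.commutes]
    exact congrArg (fun g : F →ₐ[ℚ] L => g f) this
  have hδ : ∀ y, δ (σ y) = σ (σ (δ y)) := by
    refine hadj (fun y => δ (σ y) = σ (σ (δ y))) ?_ ?_ ?_ ?_
    · intro f
      simp only [σ.commutes, hδF]
    · have hw : (algebraMap F L (ζ0 ^ i)) ^ 5 = 1 := by rw [← map_pow, hζ.pow_eq_one, map_one]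
      change δ (σ x) = σ (σ (δ x))
      rw [hδx, hσx, map_mul, map_mul, hδx, hδw _ hw, σ.commutes, hσx]
      ring
    · intro a b ha hb; simp only [map_add, ha, hb]
    · intro a b ha hb; simp only [map_mul, ha, hb]
  have hpid : IsPrincipalIdealRing (𝓞 F) := IsCyclotomicExtension.Rat.five_pid F
  have hxint : IsIntegral ℤ x := by
    refine IsIntegral.of_pow (n := 5) (by norm_num) ?_
    rw [hx5]
    exact isIntegral_natCast N
  have H1 := rank_le_fixed F K L h5 h4 σ hσ δ hδ
  have H2 := main_FL F L h5 h20 σ hσ N hN hN5 ⟨x, hxint⟩ (RingOfIntegers.ext (by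
    change x ^ 5 = ((N : 𝓞 L) : L); rw [hx5]; simp)) (ζ0 ^ i) hζ hσx
  rw [sI] at H2
  by_contra hc
  push Not at hc
  have H3 : 5 ^ 4 ≤ 5 ^ (Module.finrank (ZMod 5) (TensorProduct ℤ (ZMod 5) (Additive (ClassGroup (𝓞 K))))) :=
    Nat.pow_le_pow_right (by norm_num) hc
  have H4 := H3.trans H1
  omega

lemma upper_embed [IsCyclotomicExtension {5} ℚ F] (N : ℕ) (hN : N.Prime) (hN5 : N % 5 = 1) (α : K)
    (hα : α ^ 5 = (N : K)) (hKdeg : Module.finrank ℚ K = 5) :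
    Module.finrank (ZMod 5) (TensorProduct ℤ (ZMod 5) (Additive (ClassGroup (𝓞 K)))) ≤ 3 := by
  have : NumberField (CyclotomicField 5 K) := IsCyclotomicExtension.numberField {5} K (CyclotomicField 5 K)
  have hs : Splits ((cyclotomic 5 ℚ).map (algebraMap ℚ (CyclotomicField 5 K))) := by
    have := IsCyclotomicExtension.splits_cyclotomic (n := 5) K (CyclotomicField 5 K) (Set.mem_singleton 5)
    rwa [map_cyclotomic] at this ⊢
  have := IsCyclotomicExtension.splitting_field_cyclotomic 5 ℚ F
  let f : F →+* CyclotomicField 5 K := (IsSplittingField.lift F (cyclotomic 5 ℚ) hs).toRingHom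
  let : Algebra F (CyclotomicField 5 K) := f.toAlgebra
  exact upper_abs K F (CyclotomicField 5 K) N hN hN5 α hα hKdeg

lemma upper_bound (N : ℕ) (hN : N.Prime) (hN5 : N % 5 = 1) (α : K) (hα : α ^ 5 = (N : K))
    (hKdeg : Module.finrank ℚ K = 5) :
    Module.finrank (ZMod 5) (TensorProduct ℤ (ZMod 5) (Additive (ClassGroup (𝓞 K)))) ≤ 3 := by
  have hc : @IsCyclotomicExtension {5} ℚ (CyclotomicField 5 ℚ) _ _ DivisionRing.toRatAlgebra := by
    have h := CyclotomicField.isCyclotomicExtension 5 ℚ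
    rwa [Subsingleton.elim (CyclotomicField.algebra 5 ℚ) DivisionRing.toRatAlgebra] at h
  exact upper_embed K (CyclotomicField 5 ℚ) N hN hN5 α hα hKdeg
end
end

/-- For `p = 5` and a prime `N ≡ 1 (mod 5)`, the `5`-rank of the class group of
`K = ℚ(N^{1/5})` satisfies `1 ≤ r_K ≤ 3`. -/
theorem statement2 (N : ℕ) (hN : N.Prime) (hNmod : N % 5 = 1)
    (K : Type*) [Field K] [NumberField K]
    (α : K) (hα : α ^ 5 = (N : K)) (hKdeg : Module.finrank ℚ K = 5) :
    1 ≤ classRank 5 K ∧ classRank 5 K ≤ 3 := by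
  exact ⟨lower_bound N hN hNmod K α hα hKdeg, upper_bound K N hN hNmod α hα hKdeg⟩
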